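/- Let p be a prime with p ≡ 1 (mod 4) and let K = ℚ(√p). Then the counting function a_K(n) (the number of quadratic extensions L/K inside a fixed algebraic closure with absolute discriminant at most n) satisfies a_K(n) = C·n + o(n) as n → ∞, where C = (2 · Reg_K · h_K)/(p^{5/2} · ζ_K(2)) · ∏_{𝔭 | 2} g_𝔭(1)/(1 + N(𝔭)^{-1}); here Reg_K = log ε is the regulator of K (ε the fundamental unit), the product is over the prime ideals 𝔭 of 𝓞_K above 2, and g_𝔭(s) = 1 + N(𝔭)^{-2s} + 2·N(𝔭)^{-3s} if N(𝔭) = 2, while g_𝔭(s) = 1 + 3·N(𝔭)^{-2s} + 4·N(𝔭)^{-3s} if N(𝔭) = 4. -/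

import Mathlib

open NumberField Filter

/-- The value of the Dedekind zeta function of `K` at `2`, defined as the series
`∑ N(I)^{-2}` over nonzero ideals `I` of the ring of integers of `K`. -/
noncomputable def dedekindZetaTwo (K : Type*) [Field K] [NumberField K] : ℝ :=
  ∑' I : {I : Ideal (𝓞 K) // I ≠ ⊥}, ((Ideal.absNorm I.1 : ℝ)) ^ (-2 : ℤ)

/-- The local factor `g_𝔭(s)` at a prime `𝔭` above 2 with norm `q`:
`1 + q^{-2s} + 2 q^{-3s}` if `q = 2` (split case), and
`1 + 3 q^{-2s} + 4 q^{-3s}` otherwise (inert case, `q = 4`). -/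
noncomputable def gFactor (q : ℕ) (s : ℝ) : ℝ :=
  if q = 2 then 1 + (q : ℝ) ^ (-(2 * s)) + 2 * (q : ℝ) ^ (-(3 * s))
  else 1 + 3 * (q : ℝ) ^ (-(2 * s)) + 4 * (q : ℝ) ^ (-(3 * s))

/-- `quadCount K n` is the number of quadratic extensions `L` of `K` inside a fixed
algebraic closure of `K` with absolute discriminant at most `n`. -/
noncomputable def quadCount (K : Type*) [Field K] [NumberField K] (n : ℕ) : ℕ :=
  Nat.card {L : IntermediateField K (AlgebraicClosure K) //
    Module.finrank K L = 2 ∧ ∃ h : NumberField L, |@NumberField.discr L _ h| ≤ (n : ℤ)}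

/-!
Let `K` be any number field. A quadratic extension `L = K(√δ)` has an index ideal `G`, the smallest
fractional ideal `𝔮` for which `δ` is a square modulo `4𝔮²`, and `N(𝔡_{L/K}) N(G)² = |N δ|`.
Replacing `δ` by `l²δ` replaces `G` by `lG`, so the pairs `(L, I)` with `I` a nonzero integral
ideal correspond to the nonsquares `δ`, taken modulo squares of units, that are squares modulo
`4J²`, where `J` runs over representatives of the ideal classes (then `G = I J`). For fixed `J`
these `δ` fill finitely many cosets of the lattice `4J²`; those of bounded norm are counted by the
lattice points in a fundamental cone for the units. This yields `∑_I a(X / N(I)²) ~ c X` for the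
number `a(X)` of quadratic extensions with `N(𝔡_{L/K}) ≤ X`, and inclusion–exclusion over the
prime ideals gives `a(X) ~ (c / ζ_K(2)) X`. For `K = ℚ(√p)` the local factors at `2` are all `1`.
-/

open Module Topology
open scoped nonZeroDivisors

section Sqrt

variable {K L : Type*} [Field K] [Field L] [Algebra K L] {r : L} {δ : K}

theorem minpoly_of_sq_eq_algebraMap (hδ : ¬ IsSquare δ) (hr : r ^ 2 = algebraMap K L δ) :
    minpoly K r = Polynomial.X ^ 2 - Polynomial.C δ := by
  have irreducible : Irreducible (Polynomial.X ^ 2 - Polynomial.C δ) :=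
    X_pow_sub_C_irreducible_of_prime Nat.prime_two fun b hb => hδ ⟨b, by rw [← hb, sq]⟩
  exact (minpoly.eq_of_irreducible_of_monic irreducible (by simp [hr])
    (Polynomial.monic_X_pow_sub_C δ two_ne_zero)).symm

theorem trace_eq_zero_of_sq_eq_algebraMap [FiniteDimensional K L] (hδ : ¬ IsSquare δ)
    (hr : r ^ 2 = algebraMap K L δ) : Algebra.trace K L r = 0 := by
  rw [trace_eq_finrank_mul_minpoly_nextCoeff, minpoly_of_sq_eq_algebraMap hδ hr,
    Polynomial.nextCoeff_of_natDegree_pos (by simp)]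
  simp

theorem ne_algebraMap_of_sq_eq_algebraMap (hδ : ¬ IsSquare δ) (hr : r ^ 2 = algebraMap K L δ)
    (x : K) : r ≠ algebraMap K L x := by
  rintro rfl
  rw [← map_pow] at hr
  exact hδ ⟨x, by rw [← (algebraMap K L).injective hr, sq]⟩

theorem exists_eq_add_mul_of_finrank_eq_two (hKL : finrank K L = 2)
    (hr : ∀ x : K, r ≠ algebraMap K L x) (z : L) :
    ∃ x y : K, z = algebraMap K L x + algebraMap K L y * r := by
  have independent : LinearIndependent K ![(1 : L), r] := by
    rw [LinearIndependent.pair_iff' one_ne_zero]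
    intro a ha
    exact hr a (by rw [← ha, Algebra.smul_def, mul_one])
  let b := basisOfLinearIndependentOfCardEqFinrank independent (by simp [hKL])
  have expansion := b.sum_repr z
  simp only [b, Fin.sum_univ_two, coe_basisOfLinearIndependentOfCardEqFinrank,
    Matrix.cons_val_zero, Matrix.cons_val_one, Algebra.smul_def, mul_one] at expansion
  exact ⟨_, _, expansion.symm⟩

theorem isIntegral_of_sq_sub_mul_add_eq_zero {z : L} {t n : K} (ht : IsIntegral ℤ t)
    (hn : IsIntegral ℤ n) (h : z ^ 2 - algebraMap K L t * z + algebraMap K L n = 0) :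
    IsIntegral ℤ z := by
  have integral_over_closure : IsIntegral (integralClosure ℤ K) z := by
    refine ⟨Polynomial.X ^ 2 - Polynomial.C (⟨t, ht⟩ : integralClosure ℤ K) * Polynomial.X
      + Polynomial.C (⟨n, hn⟩ : integralClosure ℤ K), by monicity!, ?_⟩
    simp only [Polynomial.eval₂_add, Polynomial.eval₂_sub, Polynomial.eval₂_mul,
      Polynomial.eval₂_pow, Polynomial.eval₂_X, Polynomial.eval₂_C]
    exact h
  have := integralClosure.AlgebraIsIntegral (R := ℤ) (A := K)
  exact isIntegral_trans z integral_over_closure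

theorem isIntegral_add_mul_sqrt_iff (hKL : finrank K L = 2) (hδ : ¬ IsSquare δ)
    (hr : r ^ 2 = algebraMap K L δ) (x y : K) :
    IsIntegral ℤ (algebraMap K L x + algebraMap K L y * r) ↔
      IsIntegral ℤ (2 * x) ∧ IsIntegral ℤ (x ^ 2 - δ * y ^ 2) := by
  have : FiniteDimensional K L := FiniteDimensional.of_finrank_pos (by omega)
  refine ⟨fun h => ?_, fun ⟨ht, hn⟩ => isIntegral_of_sq_sub_mul_add_eq_zero ht hn (by
    simp only [map_mul, map_sub, map_pow, map_ofNat, ← hr]; ring)⟩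
  have trace_integral : IsIntegral ℤ (2 * x) := by
    have := Algebra.isIntegral_trace (R := ℤ) (L := K) h
    rw [map_add, ← Algebra.smul_def, map_smul, trace_eq_zero_of_sq_eq_algebraMap hδ hr,
      Algebra.trace_algebraMap, hKL] at this
    simpa using this
  have norm_integral := h.mul ((trace_integral.algebraMap (B := L)).sub h)
  rw [show (algebraMap K L x + algebraMap K L y * r) * (algebraMap K L (2 * x) -
      (algebraMap K L x + algebraMap K L y * r)) = algebraMap K L (x ^ 2 - δ * y ^ 2) by
    simp only [map_mul, map_sub, map_pow, map_ofNat, ← hr]; ring] at norm_integral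
  exact ⟨trace_integral, (isIntegral_algebraMap_iff (algebraMap K L).injective).1 norm_integral⟩

end Sqrt

section Discriminant

variable {F K L ι : Type*} [Field F] [Field K] [Field L] [Algebra F K] [Algebra K L] [Algebra F L]
  [IsScalarTower F K L] (b : Basis ι F K) {r : L} {δ : K}

theorem sum_algebraMap_mul_repr [Fintype ι] (x : K) :
    ∑ i, algebraMap K L (b i) * algebraMap F L (b.repr x i) = algebraMap K L x := by
  conv_rhs => rw [← b.sum_repr x, map_sum]
  refine Finset.sum_congr rfl fun i _ => ?_
  rw [Algebra.smul_def, map_mul, mul_comm, ← IsScalarTower.algebraMap_apply]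

theorem traceMatrix_sumElim_mul_sqrt [Finite ι] (hKL : finrank K L = 2) (hδ : ¬ IsSquare δ)
    (hr : r ^ 2 = algebraMap K L δ) :
    Algebra.traceMatrix F (Sum.elim (fun i => algebraMap K L (b i))
        fun i => algebraMap K L (b i) * r) =
      Matrix.fromBlocks ((2 : F) • Algebra.traceMatrix F b) 0 0
        ((2 : F) • Matrix.of fun i j => Algebra.trace F K (δ * (b i * b j))) := by
  have : FiniteDimensional F K := b.finiteDimensional_of_finite
  have : FiniteDimensional K L := FiniteDimensional.of_finrank_pos (by omega)
  have trace_base (x : K) : Algebra.trace F L (algebraMap K L x) = 2 * Algebra.trace F K x := by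
    rw [← Algebra.trace_trace (S := K), Algebra.trace_algebraMap, hKL, map_nsmul]
    simp
  have trace_base_mul_sqrt (x : K) : Algebra.trace F L (algebraMap K L x * r) = 0 := by
    rw [← Algebra.trace_trace (S := K), ← Algebra.smul_def, map_smul,
      trace_eq_zero_of_sq_eq_algebraMap hδ hr, smul_zero, map_zero]
  ext i j
  rcases i with i | i <;> rcases j with j | j <;>
    simp only [Algebra.traceMatrix_apply, Algebra.traceForm_apply, Sum.elim_inl, Sum.elim_inr,
      Matrix.fromBlocks_apply₁₁, Matrix.fromBlocks_apply₁₂, Matrix.fromBlocks_apply₂₁,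
      Matrix.fromBlocks_apply₂₂, Matrix.smul_apply, Matrix.zero_apply, smul_eq_mul,
      Matrix.of_apply]
  · rw [← map_mul, trace_base]
  · rw [← mul_assoc, ← map_mul, trace_base_mul_sqrt]
  · rw [mul_right_comm, ← map_mul, trace_base_mul_sqrt]
  · rw [← trace_base, map_mul (algebraMap K L), map_mul (algebraMap K L), ← hr]
    ring_nf

variable [Fintype ι] [DecidableEq ι]

theorem of_trace_mul_eq_leftMulMatrix_transpose_mul_traceMatrix (δ : K) :
    (Matrix.of fun i j => Algebra.trace F K (δ * (b i * b j))) =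
      (Algebra.leftMulMatrix b δ).transpose * Algebra.traceMatrix F b := by
  ext i j
  simp only [Matrix.of_apply, Matrix.mul_apply, Matrix.transpose_apply,
    Algebra.traceMatrix_apply, Algebra.traceForm_apply, Algebra.leftMulMatrix_eq_repr_mul]
  conv_lhs => rw [← mul_assoc, ← b.sum_repr (δ * b i), Finset.sum_mul, map_sum]
  exact Finset.sum_congr rfl fun k _ => by rw [Algebra.smul_mul_assoc, map_smul, smul_eq_mul]

theorem discr_sumElim_mul_sqrt (hKL : finrank K L = 2) (hδ : ¬ IsSquare δ)
    (hr : r ^ 2 = algebraMap K L δ) :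
    Algebra.discr F (Sum.elim (fun i => algebraMap K L (b i)) fun i => algebraMap K L (b i) * r) =
      4 ^ finrank F K * Algebra.discr F b ^ 2 * Algebra.norm F δ := by
  rw [Algebra.discr_def, traceMatrix_sumElim_mul_sqrt b hKL hδ hr, Matrix.det_fromBlocks_zero₂₁,
    Matrix.det_smul, Matrix.det_smul, of_trace_mul_eq_leftMulMatrix_transpose_mul_traceMatrix,
    Matrix.det_mul, Matrix.det_transpose, ← Algebra.norm_eq_matrix_det, ← Algebra.discr_def,
    finrank_eq_card_basis b, show (4 : F) = 2 * 2 by norm_num, mul_pow]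
  ring

theorem sumElim_mul_add_eq_vecMul (c : ι → K) (ρ : K) (r : L) :
    (Sum.elim (fun i => algebraMap K L (b i))
        fun i => algebraMap K L (c i) * (algebraMap K L ρ + r)) =
      Matrix.vecMul (Sum.elim (fun i => algebraMap K L (b i)) fun i => algebraMap K L (b i) * r)
        ((Matrix.fromBlocks 1 (b.toMatrix fun i => ρ * c i) 0 (b.toMatrix c)).map
          (algebraMap F L)) := by
  funext j
  rcases j with j | j
  · simp [Matrix.vecMul, dotProduct, Matrix.one_apply, apply_ite]
  · simp only [Sum.elim_inr, Matrix.vecMul, dotProduct, Fintype.sum_sum_type, Sum.elim_inl,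
      Matrix.map_apply, Matrix.fromBlocks_apply₁₂, Matrix.fromBlocks_apply₂₂,
      Basis.toMatrix_apply, mul_right_comm _ r, ← Finset.sum_mul, sum_algebraMap_mul_repr]
    rw [map_mul]
    ring

theorem discr_sumElim_mul_add (c : ι → K) (ρ : K) (r : L) :
    Algebra.discr F (Sum.elim (fun i => algebraMap K L (b i))
        fun i => algebraMap K L (c i) * (algebraMap K L ρ + r)) =
      b.det c ^ 2 * Algebra.discr F
        (Sum.elim (fun i => algebraMap K L (b i)) fun i => algebraMap K L (b i) * r) := by
  rw [sumElim_mul_add_eq_vecMul b c, Algebra.discr_of_matrix_vecMul, Matrix.det_fromBlocks_zero₂₁,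
    Matrix.det_one, one_mul, Basis.det_apply]

end Discriminant

theorem discr_eq_of_isIntegral_iff_mem_span {L κ : Type*} [Field L] [NumberField L] [Fintype κ]
    [DecidableEq κ] {v : κ → L} (independent : LinearIndependent ℚ v)
    (hv : ∀ z : L, IsIntegral ℤ z ↔ z ∈ Submodule.span ℤ (Set.range v)) :
    Algebra.discr ℚ v = discr L := by
  let w : κ → 𝓞 L := fun j => ⟨v j, (hv _).2 (Submodule.subset_span ⟨j, rfl⟩)⟩
  have independent_int : LinearIndependent ℤ w :=
    LinearIndependent.of_comp ((Algebra.linearMap (𝓞 L) L).restrictScalars ℤ)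
      (independent.restrict_scalars (R := ℤ) fun x y hxy => by simpa using hxy)
  have span_eq_top : ⊤ ≤ Submodule.span ℤ (Set.range w) := by
    rintro z -
    obtain ⟨f, hf⟩ := (Submodule.mem_span_range_iff_exists_fun ℤ).1 ((hv z).1 z.isIntegral_coe)
    refine (Submodule.mem_span_range_iff_exists_fun ℤ).2 ⟨f, RingOfIntegers.ext ?_⟩
    simp only [← hf, map_sum, w]
    rfl
  let B : Basis κ ℤ (𝓞 L) := Basis.mk independent_int span_eq_top
  rw [← discr_eq_discr L B, ← eq_intCast (algebraMap ℤ ℚ),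
    ← Algebra.discr_localizationLocalization ℤ ℤ⁰ L B]
  congr 1
  funext j
  rw [Basis.localizationLocalization_apply, Basis.mk_apply]
  rfl

theorem mem_span_range_sumElim_mul_iff {K L ι κ : Type*} [Field K] [Field L] [Algebra K L]
    {b : ι → K} {c : κ → K} {s z : L} :
    z ∈ Submodule.span ℤ (Set.range (Sum.elim (fun i => algebraMap K L (b i))
        fun j => algebraMap K L (c j) * s)) ↔
      ∃ x ∈ Submodule.span ℤ (Set.range b), ∃ y ∈ Submodule.span ℤ (Set.range c),
        algebraMap K L x + algebraMap K L y * s = z := by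
  let f : K →ₗ[ℤ] L := (Algebra.linearMap K L).restrictScalars ℤ
  let g : K →ₗ[ℤ] L := LinearMap.mulRight ℤ s ∘ₗ f
  have range_eq : Set.range (Sum.elim (fun i => algebraMap K L (b i))
      fun j => algebraMap K L (c j) * s) = f '' Set.range b ∪ g '' Set.range c := by
    rw [Set.Sum.elim_range, ← Set.range_comp, ← Set.range_comp]
    rfl
  rw [range_eq, Submodule.span_union, Submodule.span_image, Submodule.span_image,
    Submodule.mem_sup]
  simp only [Submodule.mem_map, exists_exists_and_eq_and]
  rfl

theorem abs_discr_of_isIntegral_iff {K L : Type*} [Field K] [NumberField K] [Field L]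
    [NumberField L] [Algebra K L] (hKL : finrank K L = 2) {r : L} {δ : K} (hδ : ¬ IsSquare δ)
    (hr : r ^ 2 = algebraMap K L δ) (J : (FractionalIdeal (𝓞 K)⁰ K)ˣ) (ρ : K)
    (hJ : ∀ z : L, IsIntegral ℤ z ↔ ∃ x, IsIntegral ℤ x ∧ ∃ y ∈ J.1,
      algebraMap K L x + algebraMap K L y * (algebraMap K L ρ + r) = z) :
    |(discr L : ℚ)| = 4 ^ finrank ℚ K * (discr K : ℚ) ^ 2 * |Algebra.norm ℚ δ| *
      FractionalIdeal.absNorm J.1 ^ 2 := by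
  classical
  let e : Free.ChooseBasisIndex ℤ (𝓞 K) ≃ Free.ChooseBasisIndex ℤ J.1 :=
    Fintype.equivOfCardEq (by
      rw [← finrank_eq_card_chooseBasisIndex, ← finrank_eq_card_chooseBasisIndex,
        fractionalIdeal_rank])
  let b := integralBasis K
  let c := (basisOfFractionalIdeal K J).reindex e.symm
  let v := Sum.elim (fun i => algebraMap K L (b i))
    fun i => algebraMap K L (c i) * (algebraMap K L ρ + r)
  have abs_det : |b.det c| = FractionalIdeal.absNorm J.1 :=
    det_basisOfFractionalIdeal_eq_absNorm K J e
  have discr_v : Algebra.discr ℚ v =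
      b.det c ^ 2 * (4 ^ finrank ℚ K * (discr K : ℚ) ^ 2 * Algebra.norm ℚ δ) := by
    rw [discr_sumElim_mul_add, discr_sumElim_mul_sqrt b hKL hδ hr, coe_discr]
  have hδ0 : δ ≠ 0 := fun h => hδ (h ▸ IsSquare.zero)
  have independent : LinearIndependent ℚ v := by
    by_contra h
    refine (discr_v ▸ ?_ : Algebra.discr ℚ v ≠ 0) (Algebra.discr_zero_of_not_linearIndependent ℚ h)
    have := Algebra.norm_ne_zero_iff (R := ℚ).mpr hδ0
    have := discr_ne_zero K
    have := (b.isUnit_det c).ne_zero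
    positivity
  have mem_span_b (x : K) : x ∈ Submodule.span ℤ (Set.range b) ↔ IsIntegral ℤ x :=
    (mem_span_integralBasis K).trans ⟨fun ⟨a, ha⟩ => ha ▸ a.isIntegral_coe, fun h => ⟨⟨x, h⟩, rfl⟩⟩
  have mem_span_c (y : K) : y ∈ Submodule.span ℤ (Set.range c) ↔ y ∈ J.1 := by
    rw [Basis.range_reindex, mem_span_basisOfFractionalIdeal]
    rfl
  have discr_L : Algebra.discr ℚ v = discr L :=
    discr_eq_of_isIntegral_iff_mem_span independent fun z => by
      simp only [v, mem_span_range_sumElim_mul_iff, mem_span_b, mem_span_c, hJ]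
  rw [← discr_L, discr_v, abs_mul, abs_pow, abs_det, abs_mul, abs_of_nonneg
    (a := (4 : ℚ) ^ finrank ℚ K * (discr K : ℚ) ^ 2) (by positivity)]
  ring

section IndexIdeal

variable {K : Type*} [Field K] {L : Type*} [Field L] [Algebra K L] {r : L} {δ : K}

theorem mem_one_iff_isIntegral {x : K} :
    x ∈ (1 : FractionalIdeal (𝓞 K)⁰ K) ↔ IsIntegral ℤ x :=
  FractionalIdeal.mem_one_iff _ |>.trans
    ⟨fun ⟨y, hy⟩ => hy ▸ y.isIntegral_coe, fun h => ⟨⟨x, h⟩, rfl⟩⟩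

/-- The elements of `K` congruent modulo `4𝔮²` to the square of an element of `𝔮`. -/
def squaresModFour (q : FractionalIdeal (𝓞 K)⁰ K) : Set K :=
  {x | ∃ σ ∈ q, (x - σ ^ 2) / 4 ∈ q * q}

/-- `G` is the index ideal of `δ`: the fractional ideal for which the relative discriminant of
`K(√δ)/K` is `δ G⁻²`. It is encoded as the greatest `𝔮` in the divisibility order, which is the
reverse of `≤`, such that `δ` is a square modulo `4𝔮²`. -/
def IsIndexIdeal (δ : K) (G : FractionalIdeal (𝓞 K)⁰ K) : Prop :=
  G ≠ 0 ∧ ∀ q, q ≠ 0 → (δ ∈ squaresModFour q ↔ G ≤ q)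

theorem IsIndexIdeal.unique {G G' : FractionalIdeal (𝓞 K)⁰ K} (h : IsIndexIdeal δ G)
    (h' : IsIndexIdeal δ G') : G = G' :=
  le_antisymm ((h.2 G' h'.1).1 ((h'.2 G' h'.1).2 le_rfl))
    ((h'.2 G h.1).1 ((h.2 G h.1).2 le_rfl))

/-- The coefficients `y` of `r` in the integral elements `x + y r` of `L`. -/
def sqrtCoeffs (K : Type*) [Field K] {L : Type*} [Field L] [Algebra K L] (r : L) :
    Submodule (𝓞 K) K where
  carrier := {y | ∃ x, IsIntegral ℤ (algebraMap K L x + algebraMap K L y * r)}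
  zero_mem' := ⟨0, by simpa using isIntegral_zero⟩
  add_mem' := by
    rintro y y' ⟨x, hx⟩ ⟨x', hx'⟩
    exact ⟨x + x', cast (congrArg (IsIntegral ℤ) (by simp only [map_add]; ring)) (hx.add hx')⟩
  smul_mem' := by
    rintro c y ⟨x, hx⟩
    refine ⟨(c : K) * x, ?_⟩
    refine cast (congrArg (IsIntegral ℤ) ?_) ((c.isIntegral_coe.algebraMap (B := L)).mul hx)
    rw [Algebra.smul_def]
    simp only [map_mul]
    ring

theorem isIntegral_iff_exists_add_mul_add (hKL : finrank K L = 2) (hδ : ¬ IsSquare δ)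
    (hr : r ^ 2 = algebraMap K L δ) {ρ : K}
    (hρ : ∀ y ∈ sqrtCoeffs K r, IsIntegral ℤ (algebraMap K L y * (algebraMap K L ρ + r))) (z : L) :
    IsIntegral ℤ z ↔ ∃ x, IsIntegral ℤ x ∧ ∃ y ∈ sqrtCoeffs K r,
      algebraMap K L x + algebraMap K L y * (algebraMap K L ρ + r) = z := by
  constructor
  · intro hz
    obtain ⟨x, y, rfl⟩ :=
      exists_eq_add_mul_of_finrank_eq_two hKL (ne_algebraMap_of_sq_eq_algebraMap hδ hr) z
    have hy : y ∈ sqrtCoeffs K r := ⟨x, hz⟩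
    refine ⟨x - y * ρ, ?_, y, hy, by simp only [map_sub, map_mul]; ring⟩
    rw [← isIntegral_algebraMap_iff (algebraMap K L).injective]
    refine cast (congrArg (IsIntegral ℤ) ?_) (hz.sub (hρ y hy))
    simp only [map_sub, map_mul]
    ring
  · rintro ⟨x, hx, y, hy, rfl⟩
    exact hx.algebraMap.add (hρ y hy)

variable [NumberField K]

theorem mem_spanSingleton_mul_iff {l x : K} (hl : l ≠ 0) (q : FractionalIdeal (𝓞 K)⁰ K) :
    x ∈ FractionalIdeal.spanSingleton (𝓞 K)⁰ l * q ↔ l⁻¹ * x ∈ q := by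
  rw [FractionalIdeal.mem_singleton_mul]
  exact ⟨fun ⟨y, hy, h⟩ => by rwa [h, inv_mul_cancel_left₀ hl], fun h => ⟨_, h, by field_simp⟩⟩

theorem sq_mul_mem_squaresModFour_iff {l : K} (hl : l ≠ 0) (q : FractionalIdeal (𝓞 K)⁰ K) :
    l ^ 2 * δ ∈ squaresModFour (FractionalIdeal.spanSingleton (𝓞 K)⁰ l * q) ↔
      δ ∈ squaresModFour q := by
  have mem_sq (x : K) : x ∈ FractionalIdeal.spanSingleton (𝓞 K)⁰ l * q *
      (FractionalIdeal.spanSingleton (𝓞 K)⁰ l * q) ↔ l⁻¹ * (l⁻¹ * x) ∈ q * q := by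
    rw [mul_mul_mul_comm, mul_assoc, mem_spanSingleton_mul_iff hl, mem_spanSingleton_mul_iff hl]
  simp only [squaresModFour, Set.mem_ofPred_eq, mem_spanSingleton_mul_iff hl, mem_sq]
  constructor
  · rintro ⟨σ, hσ, h⟩
    exact ⟨_, hσ, by convert h using 1; field_simp⟩
  · rintro ⟨σ, hσ, h⟩
    exact ⟨l * σ, by rwa [inv_mul_cancel_left₀ hl], by convert h using 1; field_simp⟩

theorem IsIndexIdeal.sq_mul {l : K} {G : FractionalIdeal (𝓞 K)⁰ K} (hl : l ≠ 0)
    (h : IsIndexIdeal δ G) :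
    IsIndexIdeal (l ^ 2 * δ) (FractionalIdeal.spanSingleton (𝓞 K)⁰ l * G) := by
  have span_ne_zero : FractionalIdeal.spanSingleton (𝓞 K)⁰ l ≠ 0 :=
    FractionalIdeal.spanSingleton_ne_zero_iff.2 hl
  refine ⟨mul_ne_zero span_ne_zero h.1, fun q hq => ?_⟩
  obtain ⟨q', rfl⟩ : ∃ q', FractionalIdeal.spanSingleton (𝓞 K)⁰ l * q' = q :=
    ⟨_, mul_inv_cancel_left₀ span_ne_zero q⟩
  rw [sq_mul_mem_squaresModFour_iff hl, h.2 q' (right_ne_zero_of_mul hq),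
    mul_le_mul_iff_right₀ (pos_of_ne_zero span_ne_zero)]

theorem isFractional_sqrtCoeffs (hKL : finrank K L = 2) (hδ : ¬ IsSquare δ)
    (hr : r ^ 2 = algebraMap K L δ) : IsFractional (𝓞 K)⁰ (sqrtCoeffs K r) := by
  obtain ⟨u, v, hv, rfl⟩ := IsFractionRing.div_surjective (A := 𝓞 K) δ
  have hv0 : (v : K) ≠ 0 := by simpa using nonZeroDivisors.ne_zero hv
  have hu0 : u ≠ 0 := by
    rintro rfl
    exact hδ (by simp)
  refine ⟨2 * u, mem_nonZeroDivisors_of_ne_zero (mul_ne_zero two_ne_zero hu0), ?_⟩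
  rintro y ⟨x, hx⟩
  obtain ⟨trace_integral, norm_integral⟩ := (isIntegral_add_mul_sqrt_iff hKL hδ hr x y).1 hx
  have four_integral : IsIntegral ℤ (4 : K) := by
    simpa using isIntegral_algebraMap (R := ℤ) (A := K) (x := 4)
  have sq_integral : IsIntegral ℤ ((2 * u * y : K) ^ 2) := by
    refine cast (congrArg (IsIntegral ℤ) ?_) ((u.isIntegral_coe.mul v.isIntegral_coe).mul
      ((trace_integral.pow 2).sub (four_integral.mul norm_integral)))
    field_simp
    ring
  exact ⟨⟨_, sq_integral.of_pow two_pos⟩, by rw [Algebra.smul_def, map_mul, map_ofNat]; rfl⟩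

theorem sqrtCoeffs_ne_bot (hKL : finrank K L = 2) (hδ : ¬ IsSquare δ)
    (hr : r ^ 2 = algebraMap K L δ) : sqrtCoeffs K r ≠ ⊥ := by
  obtain ⟨u, v, hv, rfl⟩ := IsFractionRing.div_surjective (A := 𝓞 K) δ
  have hv0 : (v : K) ≠ 0 := by simpa using nonZeroDivisors.ne_zero hv
  refine (Submodule.ne_bot_iff _).2 ⟨v, ⟨0, ?_⟩, hv0⟩
  refine (isIntegral_add_mul_sqrt_iff hKL hδ hr _ _).2 ⟨by simpa using isIntegral_zero, ?_⟩
  refine cast (congrArg (IsIntegral ℤ) ?_) ((u.isIntegral_coe.mul v.isIntegral_coe).neg)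
  field_simp
  ring

theorem exists_isIntegral_mul_add {J : FractionalIdeal (𝓞 K)⁰ K} (hJ0 : J ≠ 0)
    (hJ : ∀ y ∈ J, y ∈ sqrtCoeffs K r) :
    ∃ ρ : K, ∀ y ∈ J, IsIntegral ℤ (algebraMap K L y * (algebraMap K L ρ + r)) := by
  have exists_of_mem (w : K) (hw : w ∈ J * J⁻¹) : ∃ ρ : K, ∀ y ∈ J,
      IsIntegral ℤ (algebraMap K L y * (algebraMap K L ρ + algebraMap K L w * r)) := by
    refine FractionalIdeal.mul_induction_on hw (fun j hj m hm => ?_) ?_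
    · obtain ⟨x, hx⟩ := hJ j hj
      refine ⟨m * x, fun y hy => ?_⟩
      have m_mul_y : IsIntegral ℤ (m * y) :=
        mem_one_iff_isIntegral.1 ((FractionalIdeal.mem_inv_iff hJ0).1 hm y hy)
      refine cast (congrArg (IsIntegral ℤ) ?_) ((m_mul_y.algebraMap (B := L)).mul hx)
      simp only [map_mul]
      ring
    · rintro w w' ⟨ρ, h⟩ ⟨ρ', h'⟩
      refine ⟨ρ + ρ', fun y hy => ?_⟩
      refine cast (congrArg (IsIntegral ℤ) ?_) ((h y hy).add (h' y hy))
      simp only [map_add]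
      ring
  simpa using exists_of_mem 1 (by
    rw [mul_inv_cancel₀ hJ0]
    exact mem_one_iff_isIntegral.2 isIntegral_one)

theorem half_mem_sqrtCoeffs_of_mem_squaresModFour (hKL : finrank K L = 2) (hδ : ¬ IsSquare δ)
    (hr : r ^ 2 = algebraMap K L δ) {q : FractionalIdeal (𝓞 K)⁰ K} (hq : q ≠ 0)
    (h : δ ∈ squaresModFour q) {s : K} (hs : s ∈ q⁻¹) : 2⁻¹ * s ∈ sqrtCoeffs K r := by
  obtain ⟨σ, hσ, hc⟩ := h
  refine ⟨s * σ / 2, (isIntegral_add_mul_sqrt_iff hKL hδ hr _ _).2 ⟨?_, ?_⟩⟩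
  · rw [← mem_one_iff_isIntegral, mul_div_cancel₀ _ two_ne_zero]
    exact (FractionalIdeal.mem_inv_iff hq).1 hs σ hσ
  · have mem : s * s * -((δ - σ ^ 2) / 4) ∈ q⁻¹ * q⁻¹ * (q * q) :=
      FractionalIdeal.mul_mem_mul (FractionalIdeal.mul_mem_mul hs hs)
        ((Submodule.neg_mem_iff _).2 hc)
    rw [show q⁻¹ * q⁻¹ * (q * q) = 1 by field_simp, mem_one_iff_isIntegral] at mem
    refine cast (congrArg (IsIntegral ℤ) ?_) mem
    ring

theorem mem_squaresModFour_of_half_mem_sqrtCoeffs (hKL : finrank K L = 2) (hδ : ¬ IsSquare δ)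
    (hr : r ^ 2 = algebraMap K L δ) {q : FractionalIdeal (𝓞 K)⁰ K} (hq : q ≠ 0) {ρ : K}
    (hρ : ∀ y ∈ sqrtCoeffs K r, IsIntegral ℤ (algebraMap K L y * (algebraMap K L ρ + r)))
    (h : ∀ s ∈ q⁻¹, 2⁻¹ * s ∈ sqrtCoeffs K r) : δ ∈ squaresModFour q := by
  have : CharZero L := charZero_of_injective_algebraMap (algebraMap K L).injective
  have half_integral {s : K} (hs : s ∈ q⁻¹) :
      IsIntegral ℤ (algebraMap K L (2⁻¹ * s * ρ) + algebraMap K L (2⁻¹ * s) * r) := by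
    refine cast (congrArg (IsIntegral ℤ) ?_) (hρ _ (h s hs))
    rw [map_mul _ _ ρ]
    ring
  have mul_integral {s : K} (hs : s ∈ q⁻¹) : IsIntegral ℤ (s * ρ) := by
    refine cast (congrArg (IsIntegral ℤ) ?_)
      ((isIntegral_add_mul_sqrt_iff hKL hδ hr _ _).1 (half_integral hs)).1
    ring
  refine ⟨ρ, ?_, ?_⟩
  · rw [← inv_inv q, FractionalIdeal.mem_inv_iff (inv_ne_zero hq)]
    exact fun s hs => by rw [mem_one_iff_isIntegral, mul_comm]; exact mul_integral hs
  · rw [← inv_inv (q * q), FractionalIdeal.mem_inv_iff (inv_ne_zero (mul_ne_zero hq hq)), mul_inv]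
    refine fun w hw => FractionalIdeal.mul_induction_on hw (fun s hs s' hs' => ?_) fun w w' h h' =>
      by rw [mul_add]; exact Submodule.add_mem _ h h'
    rw [mem_one_iff_isIntegral, ← isIntegral_algebraMap_iff (algebraMap K L).injective]
    refine cast (congrArg (IsIntegral ℤ) ?_) ((half_integral hs).mul ((half_integral hs').sub
      ((mul_integral hs').algebraMap (B := L))))
    simp only [map_mul, map_sub, map_pow, map_ofNat, map_div₀, map_inv₀, ← hr]
    field_simp
    ring

end IndexIdeal

theorem exists_isIndexIdeal {K L : Type*} [Field K] [NumberField K] [Field L] [NumberField L]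
    [Algebra K L] (hKL : finrank K L = 2) {r : L} {δ : K} (hδ : ¬ IsSquare δ)
    (hr : r ^ 2 = algebraMap K L δ) :
    ∃ G : FractionalIdeal (𝓞 K)⁰ K, IsIndexIdeal δ G ∧
      |(discr L : ℚ)| * FractionalIdeal.absNorm G ^ 2 =
        (discr K : ℚ) ^ 2 * |Algebra.norm ℚ δ| := by
  let J : FractionalIdeal (𝓞 K)⁰ K := ⟨sqrtCoeffs K r, isFractional_sqrtCoeffs hKL hδ hr⟩
  have mem_J (y : K) : y ∈ J ↔ y ∈ sqrtCoeffs K r := Iff.rfl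
  have hJ0 : J ≠ 0 := fun h => sqrtCoeffs_ne_bot hKL hδ hr
    (FractionalIdeal.coeToSubmodule_eq_bot.2 h)
  obtain ⟨ρ, hρ⟩ := exists_isIntegral_mul_add hJ0 fun y hy => (mem_J y).1 hy
  have discr_L := abs_discr_of_isIntegral_iff hKL hδ hr (Units.mk0 J hJ0) ρ
    (isIntegral_iff_exists_add_mul_add hKL hδ hr hρ)
  let twoJ := FractionalIdeal.spanSingleton (𝓞 K)⁰ (2 : K) * J
  have twoJ_ne_zero : twoJ ≠ 0 :=
    mul_ne_zero (FractionalIdeal.spanSingleton_ne_zero_iff.2 two_ne_zero) hJ0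
  refine ⟨twoJ⁻¹, ⟨inv_ne_zero twoJ_ne_zero, fun q hq => ?_⟩, ?_⟩
  · have inv_le_iff : twoJ⁻¹ ≤ q ↔ ∀ s ∈ q⁻¹, 2⁻¹ * s ∈ sqrtCoeffs K r := by
      rw [inv_le_comm₀ (pos_of_ne_zero twoJ_ne_zero) (pos_of_ne_zero hq)]
      exact forall₂_congr fun s _ => mem_spanSingleton_mul_iff two_ne_zero J
    rw [inv_le_iff]
    exact ⟨fun h s hs => half_mem_sqrtCoeffs_of_mem_squaresModFour hKL hδ hr hq h hs,
      mem_squaresModFour_of_half_mem_sqrtCoeffs hKL hδ hr hq hρ⟩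
  · have norm_two : Algebra.norm ℚ (2 : K) = 2 ^ finrank ℚ K := by
      simpa using Algebra.norm_algebraMap (R := ℚ) (S := K) 2
    have absNorm_ne_zero : FractionalIdeal.absNorm J ≠ 0 := by
      rwa [Ne, FractionalIdeal.absNorm_eq_zero_iff]
    rw [discr_L, Units.val_mk0, map_inv₀, map_mul, FractionalIdeal.absNorm_span_singleton, norm_two,
      abs_of_nonneg (a := (2 : ℚ) ^ finrank ℚ K) (by positivity), show (4 : ℚ) = 2 ^ 2 by norm_num,
      ← pow_mul, mul_comm 2, pow_mul]
    field_simp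

section SqrtField

theorem exists_sq_eq_algebraMap_of_finrank_eq_two {K L : Type*} [Field K] [CharZero K] [Field L]
    [Algebra K L] (hKL : finrank K L = 2) :
    ∃ δ : K, ¬ IsSquare δ ∧ ∃ r : L, r ^ 2 = algebraMap K L δ := by
  have : CharZero L := charZero_of_injective_algebraMap (algebraMap K L).injective
  obtain ⟨α, hα⟩ : ∃ α : L, ∀ x : K, α ≠ algebraMap K L x := by
    by_contra! hL
    have : finrank K L ≤ 1 := finrank_le_one (1 : L) fun w => by
      obtain ⟨x, hx⟩ := hL w
      exact ⟨x, by rw [hx, Algebra.smul_def, mul_one]⟩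
    omega
  obtain ⟨c, b, hbc⟩ := exists_eq_add_mul_of_finrank_eq_two hKL hα (α ^ 2)
  have hr : (α - algebraMap K L (b / 2)) ^ 2 = algebraMap K L (c + b ^ 2 / 4) := by
    simp only [sub_sq, hbc, map_add, map_div₀, map_pow, map_ofNat]
    field_simp
    ring
  refine ⟨c + b ^ 2 / 4, ?_, _, hr⟩
  rintro ⟨y, hy⟩
  rw [hy, ← sq, map_pow] at hr
  rcases sq_eq_sq_iff_eq_or_eq_neg.1 hr with h | h
  · exact hα (y + b / 2) (by rw [map_add, ← h, sub_add_cancel])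
  · exact hα (-y + b / 2) (by rw [map_add, map_neg, ← h, sub_add_cancel])

theorem exists_eq_sq_mul_of_sq_eq_algebraMap {K L : Type*} [Field K] [CharZero K] [Field L]
    [Algebra K L] (hKL : finrank K L = 2) {δ δ' : K} {r s : L} (hδ : ¬ IsSquare δ)
    (hδ' : ¬ IsSquare δ') (hr : r ^ 2 = algebraMap K L δ) (hs : s ^ 2 = algebraMap K L δ') :
    ∃ l : K, l ≠ 0 ∧ δ' = l ^ 2 * δ := by
  have r_not_mem := ne_algebraMap_of_sq_eq_algebraMap hδ hr
  obtain ⟨a, b, rfl⟩ := exists_eq_add_mul_of_finrank_eq_two hKL r_not_mem s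
  have two_ab_mul_r :
      algebraMap K L (2 * a * b) * r = algebraMap K L (δ' - a ^ 2 - b ^ 2 * δ) := by
    simp only [map_mul, map_sub, map_pow, map_ofNat, ← hs, ← hr]
    ring
  have two_ab_eq_zero : 2 * a * b = 0 := by
    by_contra hne
    apply r_not_mem ((δ' - a ^ 2 - b ^ 2 * δ) / (2 * a * b))
    rw [map_div₀, eq_div_iff (by simpa using hne), mul_comm, two_ab_mul_r]
  have hb : b ≠ 0 := by
    rintro rfl
    exact ne_algebraMap_of_sq_eq_algebraMap hδ' hs a (by simp)
  obtain rfl : a = 0 := by simpa [hb] using two_ab_eq_zero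
  refine ⟨b, hb, (algebraMap K L).injective ?_⟩
  rw [← hs, map_mul, ← hr, map_zero, map_pow]
  ring

/-- The field `K(√δ)` inside the algebraic closure of `K`, generated by both square roots of `δ`
so that none has to be chosen. -/
noncomputable def sqrtField {K : Type*} [Field K] (δ : K) :
    IntermediateField K (AlgebraicClosure K) :=
  IntermediateField.adjoin K {r | r ^ 2 = algebraMap K (AlgebraicClosure K) δ}

open IntermediateField

variable {K : Type*} [Field K]

theorem sqrtField_eq_adjoin_simple {δ : K} {r : AlgebraicClosure K}
    (hr : r ^ 2 = algebraMap K (AlgebraicClosure K) δ) : sqrtField δ = K⟮r⟯ := by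
  refine le_antisymm (adjoin_le_iff.2 fun s hs => ?_)
    (adjoin_simple_le_iff.2 (subset_adjoin K _ hr))
  rcases sq_eq_sq_iff_eq_or_eq_neg.1 (Eq.trans hs hr.symm) with rfl | rfl
  · exact mem_adjoin_simple_self K s
  · exact neg_mem (mem_adjoin_simple_self K r)

theorem exists_sq_eq_algebraMap_sqrtField (δ : K) :
    ∃ r : sqrtField δ, r ^ 2 = algebraMap K (sqrtField δ) δ := by
  obtain ⟨r, hr⟩ := IsAlgClosed.exists_pow_nat_eq (algebraMap K (AlgebraicClosure K) δ) two_pos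
  exact ⟨⟨r, subset_adjoin K _ hr⟩, Subtype.ext hr⟩

theorem finrank_sqrtField {δ : K} (hδ : ¬ IsSquare δ) : finrank K (sqrtField δ) = 2 := by
  obtain ⟨r, hr⟩ := IsAlgClosed.exists_pow_nat_eq (algebraMap K (AlgebraicClosure K) δ) two_pos
  rw [sqrtField_eq_adjoin_simple hr, adjoin.finrank (Algebra.IsIntegral.isIntegral r),
    minpoly_of_sq_eq_algebraMap hδ hr, Polynomial.natDegree_X_pow_sub_C]

theorem sqrtField_sq_mul {l : K} (hl : l ≠ 0) (δ : K) : sqrtField (l ^ 2 * δ) = sqrtField δ := by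
  have le {l : K} (hl : l ≠ 0) (δ : K) : sqrtField (l ^ 2 * δ) ≤ sqrtField δ := by
    refine adjoin_le_iff.2 fun r hr => ?_
    have hl' : algebraMap K (AlgebraicClosure K) l ≠ 0 := by simpa using hl
    have mem : algebraMap K (AlgebraicClosure K) l⁻¹ * r ∈ sqrtField δ := subset_adjoin K _ <| by
      rw [Set.mem_ofPred_eq, mul_pow, show r ^ 2 = _ from hr, map_mul, map_inv₀, map_pow]
      field_simp
    have := mul_mem (IntermediateField.algebraMap_mem (sqrtField δ) l) mem
    rwa [map_inv₀, mul_inv_cancel_left₀ hl'] at this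
  refine le_antisymm (le hl δ) ?_
  have := le (inv_ne_zero hl) (l ^ 2 * δ)
  rwa [← mul_assoc, ← mul_pow, inv_mul_cancel₀ hl, one_pow, one_mul] at this

variable [CharZero K]

theorem exists_eq_sq_mul_of_sqrtField_eq {δ δ' : K} (hδ : ¬ IsSquare δ) (hδ' : ¬ IsSquare δ')
    (h : sqrtField δ = sqrtField δ') : ∃ l : K, l ≠ 0 ∧ δ' = l ^ 2 * δ := by
  obtain ⟨r, hr⟩ := exists_sq_eq_algebraMap_sqrtField δ
  obtain ⟨s, hs⟩ := h ▸ exists_sq_eq_algebraMap_sqrtField δ'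
  exact exists_eq_sq_mul_of_sq_eq_algebraMap (finrank_sqrtField hδ) hδ hδ' hr hs

theorem exists_sqrtField_eq {L : IntermediateField K (AlgebraicClosure K)}
    (hKL : finrank K L = 2) : ∃ δ : K, ¬ IsSquare δ ∧ sqrtField δ = L := by
  obtain ⟨δ, hδ, r, hr⟩ := exists_sq_eq_algebraMap_of_finrank_eq_two hKL
  have hr' : (r : AlgebraicClosure K) ^ 2 = algebraMap K (AlgebraicClosure K) δ :=
    congrArg (algebraMap L (AlgebraicClosure K)) hr
  have : FiniteDimensional K L := FiniteDimensional.of_finrank_pos (by omega)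
  refine ⟨δ, hδ, eq_of_le_of_finrank_eq ?_ ((finrank_sqrtField hδ).trans hKL.symm)⟩
  rw [sqrtField_eq_adjoin_simple hr']
  exact adjoin_simple_le_iff.2 r.2

end SqrtField

theorem numberField_of_finrank_eq_two {K L : Type*} [Field K] [NumberField K] [Field L]
    [Algebra K L] (hKL : finrank K L = 2) : NumberField L := by
  have : FiniteDimensional K L := FiniteDimensional.of_finrank_pos (by omega)
  exact NumberField.of_module_finite K L

section InclusionExclusion

open IsDedekindDomain

variable {R : Type*} [CommRing R] [IsDedekindDomain R]

/-- A product of distinct nonzero primes, as an element of the cancellative monoid of nonzero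
ideals. -/
noncomputable def primeProd (T : Finset (HeightOneSpectrum R)) : (Ideal R)⁰ :=
  ∏ v ∈ T, ⟨v.asIdeal, mem_nonZeroDivisors_of_ne_zero v.ne_bot⟩

/-- The finite set of primes dividing a nonzero ideal. -/
noncomputable def primeDivisors (M : (Ideal R)⁰) : Finset (HeightOneSpectrum R) :=
  (Ideal.finite_factors (nonZeroDivisors.coe_ne_zero M)).toFinset

theorem mem_primeDivisors {M : (Ideal R)⁰} {v : HeightOneSpectrum R} :
    v ∈ primeDivisors M ↔ v.asIdeal ∣ M := by
  simp [primeDivisors]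

theorem coe_primeProd (T : Finset (HeightOneSpectrum R)) :
    (primeProd T : Ideal R) = ∏ v ∈ T, v.asIdeal := by
  simp [primeProd]

theorem subset_primeDivisors_iff {M : (Ideal R)⁰} {T : Finset (HeightOneSpectrum R)} :
    T ⊆ primeDivisors M ↔ ∃ I, primeProd T * I = M := by
  simp only [Finset.subset_iff, mem_primeDivisors]
  constructor
  · intro h
    obtain ⟨I, hI⟩ : (primeProd T : Ideal R) ∣ M := by
      rw [coe_primeProd]
      classical
      have := Finset.prod_primes_dvd (s := T.image HeightOneSpectrum.asIdeal) (M : Ideal R)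
        (by simpa using fun v _ => v.prime) (by simpa using h)
      rwa [Finset.prod_image fun v _ w _ => HeightOneSpectrum.ext] at this
    have hI0 : I ≠ 0 := right_ne_zero_of_mul (hI ▸ nonZeroDivisors.coe_ne_zero M)
    exact ⟨⟨I, mem_nonZeroDivisors_of_ne_zero hI0⟩, Subtype.ext hI.symm⟩
  · rintro ⟨I, rfl⟩ v hv
    exact Dvd.dvd.mul_right (coe_primeProd T ▸ Finset.dvd_prod_of_mem _ hv) _

theorem primeProd_injective :
    Function.Injective (primeProd (R := R)) := fun T T' h => by
  have primeDivisors_primeProd (T : Finset (HeightOneSpectrum R)) :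
      primeDivisors (primeProd T) = T := by
    refine Finset.Subset.antisymm (fun v hv => ?_) (subset_primeDivisors_iff.2 ⟨1, mul_one _⟩)
    rw [mem_primeDivisors, coe_primeProd, v.prime.dvd_finsetProd_iff] at hv
    obtain ⟨w, hw, hvw⟩ := hv
    rwa [HeightOneSpectrum.ext (associated_iff_eq.1 (v.prime.associated_of_dvd w.prime hvw))]
  rw [← primeDivisors_primeProd T, h, primeDivisors_primeProd]

theorem primeDivisors_eq_empty_iff {M : (Ideal R)⁰} : primeDivisors M = ∅ ↔ M = 1 := by
  simp only [Finset.eq_empty_iff_forall_notMem, mem_primeDivisors]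
  constructor
  · intro h
    by_contra hM
    obtain ⟨P, hP, hMP⟩ := Ideal.exists_le_maximal (M : Ideal R) fun h =>
      hM (Subtype.ext (h.trans Ideal.one_eq_top.symm))
    have hP0 : P ≠ ⊥ := ne_bot_of_le_ne_bot (nonZeroDivisors.coe_ne_zero M) hMP
    exact h ⟨P, hP.isPrime, hP0⟩ (Ideal.dvd_iff_le.2 hMP)
  · rintro rfl v hv
    exact v.prime.not_isUnit (isUnit_of_dvd_one hv)

theorem tsum_prod_neg_one_pow_card_mul {f : (Ideal R)⁰ → ℝ}
    (hf : Summable fun x : Finset (HeightOneSpectrum R) × (Ideal R)⁰ => f (primeProd x.1 * x.2)) :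
    ∑' x : Finset (HeightOneSpectrum R) × (Ideal R)⁰,
      (-1) ^ x.1.card * f (primeProd x.1 * x.2) = f 1 := by
  classical
  let g : (Ideal R)⁰ × Finset (HeightOneSpectrum R) → ℝ := fun y =>
    if y.2 ⊆ primeDivisors y.1 then (-1) ^ y.2.card * f y.1 else 0
  let φ : Finset (HeightOneSpectrum R) × (Ideal R)⁰ → (Ideal R)⁰ × Finset (HeightOneSpectrum R) :=
    fun x => (primeProd x.1 * x.2, x.1)
  have φ_injective : Function.Injective φ := fun ⟨T, I⟩ ⟨T', I'⟩ h => by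
    obtain rfl : T = T' := congrArg Prod.snd h
    exact Prod.ext rfl (mul_left_cancel (congrArg Prod.fst h))
  have g_φ (x) : g (φ x) = (-1) ^ x.1.card * f (primeProd x.1 * x.2) :=
    if_pos (subset_primeDivisors_iff.2 ⟨x.2, rfl⟩)
  have support_subset : Function.support g ⊆ Set.range φ := fun y hy => by
    obtain ⟨I, hI⟩ := subset_primeDivisors_iff.1 (of_not_not fun h => hy (if_neg h))
    exact ⟨(y.2, I), Prod.ext hI rfl⟩
  have g_summable : Summable g := by
    rw [← φ_injective.summable_iff fun y hy => Function.notMem_support.1 fun h =>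
      hy (support_subset h)]
    refine Summable.of_norm (hf.norm.congr fun x => ?_)
    simp [g_φ]
  have tsum_fiber (M : (Ideal R)⁰) : ∑' T, g (M, T) = if M = 1 then f M else 0 := by
    rw [tsum_eq_sum (s := (primeDivisors M).powerset) fun T hT => if_neg (by simpa using hT),
      Finset.sum_congr rfl fun T hT => if_pos (Finset.mem_powerset.1 hT)]
    have alternating_sum := congrArg (Int.cast (R := ℝ))
      (Finset.sum_powerset_neg_one_pow_card (x := primeDivisors M))
    push_cast at alternating_sum
    simp only [← Finset.sum_mul, alternating_sum, primeDivisors_eq_empty_iff, ite_mul, one_mul,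
      zero_mul]
  calc ∑' x : Finset (HeightOneSpectrum R) × (Ideal R)⁰,
        (-1) ^ x.1.card * f (primeProd x.1 * x.2)
      = ∑' x, g (φ x) := tsum_congr fun x => (g_φ x).symm
    _ = ∑' y, g y := φ_injective.tsum_eq support_subset
    _ = f 1 := by rw [g_summable.tsum_prod, tsum_congr tsum_fiber, tsum_ite_eq]

theorem tsum_neg_one_pow_card_mul_tsum {f : (Ideal R)⁰ → ℝ}
    (hf : Summable fun x : Finset (HeightOneSpectrum R) × (Ideal R)⁰ => f (primeProd x.1 * x.2)) :
    ∑' T : Finset (HeightOneSpectrum R), (-1) ^ T.card * ∑' I, f (primeProd T * I) = f 1 := by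
  rw [← tsum_prod_neg_one_pow_card_mul hf,
    Summable.tsum_prod (Summable.of_norm (by simpa using hf.norm))]
  exact tsum_congr fun T => tsum_mul_left.symm

end InclusionExclusion

section IdealNorms

variable (K : Type*) [Field K] [NumberField K]

theorem sum_card_absNorm_eq_le (n : ℕ) :
    ∑ k ∈ Finset.Icc 1 n, Nat.card {I : Ideal (𝓞 K) // Ideal.absNorm I = k} ≤
      Nat.card {I : Ideal (𝓞 K) // (Ideal.absNorm I : ℝ) ≤ n} := by
  classical
  calc ∑ k ∈ Finset.Icc 1 n, Nat.card {I : Ideal (𝓞 K) // Ideal.absNorm I = k}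
      = Nat.card (Ideal.absNorm (S := 𝓞 K) ⁻¹' Finset.Icc 1 n) :=
        (Finset.card_preimage_eq_sum_card_image_eq
          fun k _ => Ideal.finite_setOfPred_absNorm_eq k).symm
    _ ≤ _ := Nat.card_mono (t := {I | (Ideal.absNorm I : ℝ) ≤ n})
        (by simpa using Ideal.finite_setOfPred_absNorm_le n)
        fun I hI => Set.mem_ofPred_eq ▸ Nat.cast_le.2 (Finset.mem_Icc.1 hI).2

theorem summable_card_absNorm_eq_mul_zpow_neg_two :
    Summable fun n : ℕ =>
      (Nat.card {I : Ideal (𝓞 K) // Ideal.absNorm I = n} : ℝ) * (n : ℝ) ^ (-2 : ℤ) := by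
  have card_le_isBigO : (fun n : ℕ => (Nat.card {I : Ideal (𝓞 K) // (Ideal.absNorm I : ℝ) ≤ n} : ℝ))
      =O[atTop] fun n : ℕ => (n : ℝ) := by
    refine Asymptotics.isBigO_of_div_tendsto_nhds ?_ _
      ((Ideal.tendsto_norm_le_div_atTop K).comp tendsto_natCast_atTop_atTop)
    filter_upwards [eventually_ne_atTop 0] with n hn h using absurd h (Nat.cast_ne_zero.2 hn)
  have lseries_summable : LSeriesSummable
      (fun n => ((Nat.card {I : Ideal (𝓞 K) // Ideal.absNorm I = n} : ℝ) : ℂ)) 2 := by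
    refine LSeriesSummable_of_sum_norm_bigO_and_nonneg (r := 1) ?_ (fun n => by positivity)
      zero_le_one (by norm_num)
    refine .trans (.of_norm_le fun n => ?_) (by simpa using card_le_isBigO)
    rw [← Nat.cast_sum, RCLike.norm_natCast]
    exact_mod_cast sum_card_absNorm_eq_le K n
  refine lseries_summable.norm.congr fun n => ?_
  rw [LSeries.norm_term_eq]
  split_ifs with hn
  · simp [hn]
  · simp [zpow_neg, div_eq_mul_inv]

theorem summable_absNorm_zpow_neg_two :
    Summable fun I : Ideal (𝓞 K) => (Ideal.absNorm I : ℝ) ^ (-2 : ℤ) := by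
  have (n : ℕ) : Finite {I : Ideal (𝓞 K) // Ideal.absNorm I = n} :=
    Ideal.finite_setOfPred_absNorm_eq n
  rw [← (Equiv.sigmaFiberEquiv fun I : Ideal (𝓞 K) => Ideal.absNorm I).summable_iff,
    summable_sigma_of_nonneg fun x => by dsimp; positivity]
  refine ⟨fun n => Summable.of_finite,
    (summable_card_absNorm_eq_mul_zpow_neg_two K).congr fun n => ?_⟩
  rw [← nsmul_eq_mul, ← tsum_const]
  exact tsum_congr fun I => by simp [I.2]

theorem tsum_absNorm_zpow_neg_two_eq_dedekindZetaTwo :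
    ∑' I : (Ideal (𝓞 K))⁰, (Ideal.absNorm (I : Ideal (𝓞 K)) : ℝ) ^ (-2 : ℤ) = dedekindZetaTwo K :=
  (Equiv.subtypeEquivRight fun _ => mem_nonZeroDivisors_iff_ne_zero).tsum_eq
    fun I : {I : Ideal (𝓞 K) // I ≠ ⊥} => (Ideal.absNorm I.1 : ℝ) ^ (-2 : ℤ)

open IsDedekindDomain

theorem summable_absNorm_primeProd_mul_zpow_neg_two :
    Summable fun x : Finset (HeightOneSpectrum (𝓞 K)) × (Ideal (𝓞 K))⁰ =>
      (Ideal.absNorm ((primeProd x.1 * x.2 : (Ideal (𝓞 K))⁰) : Ideal (𝓞 K)) : ℝ) ^ (-2 : ℤ) := by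
  have h := (summable_absNorm_zpow_neg_two K).comp_injective
    (Subtype.val_injective (p := (· ∈ (Ideal (𝓞 K))⁰)))
  refine ((h.comp_injective primeProd_injective).mul_of_nonneg h
    (fun _ => zpow_nonneg (Nat.cast_nonneg _) _)
    fun _ => zpow_nonneg (Nat.cast_nonneg _) _).congr fun x => ?_
  simp [mul_pow, mul_comm]

end IdealNorms

section Sieve

theorem ncard_eq_tsum_ncard_fiber {α β : Type*} {S : Set (α × β)} (hS : S.Finite) :
    (S.ncard : ℝ) = ∑' b, ({a | (a, b) ∈ S}.ncard : ℝ) := by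
  classical
  have fiber_ncard (b : β) :
      {a | (a, b) ∈ S}.ncard = (hS.toFinset.filter (·.2 = b)).card := by
    rw [← Set.ncard_coe_finset, ← Set.ncard_image_of_injective _ (Prod.mk_left_injective b)]
    congr 1
    ext ⟨a, b'⟩
    simp only [Set.mem_image, Set.mem_ofPred_eq, Prod.mk.injEq, Finset.coe_filter,
      Set.Finite.mem_toFinset]
    grind
  rw [tsum_eq_sum (s := hS.toFinset.image Prod.snd) fun b hb => by
    rw [fiber_ncard, Finset.card_eq_zero.2 (by grind), Nat.cast_zero]]
  simp_rw [fiber_ncard]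
  rw [← Nat.cast_sum, Set.ncard_eq_toFinset_card _ hS,
    Finset.card_eq_sum_card_image Prod.snd]

theorem exists_forall_le_mul_of_tendsto_div {A : ℝ → ℝ} {c w₀ : ℝ} (hmono : Monotone A)
    (hw₀ : 0 < w₀) (hzero : ∀ X < w₀, A X = 0) (hlim : Tendsto (fun X => A X / X) atTop (𝓝 c)) :
    ∃ C, ∀ X, 0 < X → A X ≤ C * X := by
  obtain ⟨X₁, hlarge⟩ :=
    (eventually_forall_ge_atTop.2 (hlim.eventually_le_const (lt_add_one c))).exists
  have A_nonneg (X : ℝ) : 0 ≤ A X := by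
    rw [← hzero (min X (w₀ / 2)) (by grind)]
    exact hmono (min_le_left _ _)
  refine ⟨max (c + 1) (A X₁ / w₀), fun X hX => ?_⟩
  rcases lt_or_ge X w₀ with hXw | hXw
  · rw [hzero X hXw]
    exact mul_nonneg (le_max_of_le_right (div_nonneg (A_nonneg _) hw₀.le)) hX.le
  rcases le_total X X₁ with hX₁X | hX₁X
  · calc A X ≤ A X₁ := hmono hX₁X
      _ = A X₁ / w₀ * w₀ := (div_mul_cancel₀ _ hw₀.ne').symm
      _ ≤ A X₁ / w₀ * X := by gcongr; exact div_nonneg (A_nonneg _) hw₀.le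
      _ ≤ _ := by gcongr; exact le_max_right _ _
  · calc A X ≤ (c + 1) * X := (div_le_iff₀ hX).1 (hlarge X hX₁X)
      _ ≤ _ := by gcongr; exact le_max_left _ _

theorem tendsto_tsum_mul_comp_div_div {ι : Type*} {s M : ι → ℝ} {A : ℝ → ℝ} {c C : ℝ}
    (hs : ∀ i, ‖s i‖ ≤ 1) (hM : ∀ i, 0 < M i) (hMsum : Summable fun i => (M i)⁻¹)
    (hA : ∀ X, 0 ≤ A X) (hC : ∀ X, 0 < X → A X ≤ C * X)
    (hlim : Tendsto (fun X => A X / X) atTop (𝓝 c)) :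
    Tendsto (fun X => (∑' i, s i * A (X / M i)) / X) atTop (𝓝 (c * ∑' i, s i * (M i)⁻¹)) := by
  have term_eq (i) (X : ℝ) : s i * A (X / M i) / X = s i * (A (X / M i) / (X / M i) * (M i)⁻¹) := by
    have := (hM i).ne'
    field_simp
  simp_rw [← tsum_div_const, ← tsum_mul_left, term_eq, mul_left_comm c]
  refine tendsto_tsum_of_dominated_convergence (hMsum.mul_left C) (fun i => ?_) ?_
  · exact ((hlim.comp (tendsto_id.atTop_div_const (hM i))).mul_const _).const_mul _
  · filter_upwards [eventually_gt_atTop 0] with X hX i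
    have hXi : 0 < X / M i := div_pos hX (hM i)
    have := hM i
    calc ‖s i * (A (X / M i) / (X / M i) * (M i)⁻¹)‖
        ≤ 1 * ‖A (X / M i) / (X / M i) * (M i)⁻¹‖ := by rw [norm_mul]; gcongr; exact hs i
      _ = A (X / M i) / (X / M i) * (M i)⁻¹ := by
        have := hA (X / M i)
        rw [one_mul, Real.norm_of_nonneg (by positivity)]
      _ ≤ C * (M i)⁻¹ := by gcongr; exact (div_le_iff₀ hXi).2 (hC _ hXi)

variable {K : Type*} [Field K] [NumberField K]

open IsDedekindDomain

theorem tsum_neg_one_pow_card_mul_absNorm_primeProd_mul_dedekindZetaTwo :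
    (∑' T : Finset (HeightOneSpectrum (𝓞 K)),
      (-1) ^ T.card * ((Ideal.absNorm (primeProd T : Ideal (𝓞 K)) : ℝ) ^ 2)⁻¹) *
        dedekindZetaTwo K = 1 := by
  have h := tsum_neg_one_pow_card_mul_tsum
    (f := fun I : (Ideal (𝓞 K))⁰ => (Ideal.absNorm (I : Ideal (𝓞 K)) : ℝ) ^ (-2 : ℤ))
    (summable_absNorm_primeProd_mul_zpow_neg_two K)
  simp only [Submonoid.coe_mul, map_mul, Nat.cast_mul, mul_zpow, tsum_mul_left,
    tsum_absNorm_zpow_neg_two_eq_dedekindZetaTwo, Submonoid.coe_one, map_one, Nat.cast_one,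
    one_zpow, ← mul_assoc, tsum_mul_right] at h
  exact h

theorem eq_tsum_neg_one_pow_card_mul_of_eq_tsum {a A : ℝ → ℝ} {C : ℝ} (ha : ∀ X, 0 ≤ a X)
    (hC : ∀ X, 0 < X → a X ≤ C * X)
    (hA : ∀ X, A X = ∑' I : (Ideal (𝓞 K))⁰, a (X / (Ideal.absNorm (I : Ideal (𝓞 K)) : ℝ) ^ 2))
    {X : ℝ} (hX : 0 < X) :
    a X = ∑' T : Finset (HeightOneSpectrum (𝓞 K)),
      (-1) ^ T.card * A (X / (Ideal.absNorm (primeProd T : Ideal (𝓞 K)) : ℝ) ^ 2) := by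
  let f : (Ideal (𝓞 K))⁰ → ℝ := fun I => a (X / (Ideal.absNorm (I : Ideal (𝓞 K)) : ℝ) ^ 2)
  have f_le (I : (Ideal (𝓞 K))⁰) :
      f I ≤ C * X * (Ideal.absNorm (I : Ideal (𝓞 K)) : ℝ) ^ (-2 : ℤ) := by
    have := Ideal.absNorm_pos_of_nonZeroDivisors I
    refine (hC _ (by positivity)).trans_eq ?_
    rw [zpow_neg, zpow_ofNat, mul_assoc, div_eq_mul_inv]
  have f_summable := Summable.of_nonneg_of_le (fun x => ha _) (fun x => f_le _)
    ((summable_absNorm_primeProd_mul_zpow_neg_two K).mul_left (C * X))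
  have h := tsum_neg_one_pow_card_mul_tsum (f := f) f_summable
  simp only [f, Submonoid.coe_one, map_one, Nat.cast_one, one_pow, div_one] at h
  rw [← h]
  refine tsum_congr fun T => ?_
  simp only [hA, Submonoid.coe_mul, map_mul, Nat.cast_mul, mul_pow, div_div]

theorem tendsto_div_of_tendsto_tsum_div {a A : ℝ → ℝ} {c C : ℝ} (ha : ∀ X, 0 ≤ a X)
    (hA : ∀ X, A X = ∑' I : (Ideal (𝓞 K))⁰, a (X / (Ideal.absNorm (I : Ideal (𝓞 K)) : ℝ) ^ 2))
    (haA : ∀ X, a X ≤ A X) (hC : ∀ X, 0 < X → A X ≤ C * X)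
    (hlim : Tendsto (fun X => A X / X) atTop (𝓝 c)) :
    Tendsto (fun X => a X / X) atTop (𝓝 (c / dedekindZetaTwo K)) := by
  have zeta_inv := tsum_neg_one_pow_card_mul_absNorm_primeProd_mul_dedekindZetaTwo (K := K)
  rw [div_eq_mul_inv, ← eq_inv_of_mul_eq_one_left zeta_inv]
  have norm_summable : Summable fun T : Finset (HeightOneSpectrum (𝓞 K)) =>
      ((Ideal.absNorm (primeProd T : Ideal (𝓞 K)) : ℝ) ^ 2)⁻¹ := by
    simpa only [Function.comp_def, zpow_neg, zpow_ofNat] using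
      (summable_absNorm_zpow_neg_two K).comp_injective
        (Subtype.val_injective.comp (primeProd_injective (R := 𝓞 K)))
  have h := tendsto_tsum_mul_comp_div_div
    (s := fun T : Finset (HeightOneSpectrum (𝓞 K)) => (-1) ^ T.card)
    (M := fun T => (Ideal.absNorm (primeProd T : Ideal (𝓞 K)) : ℝ) ^ 2) (by simp)
    (fun T => by have := Ideal.absNorm_pos_of_nonZeroDivisors (primeProd T); positivity)
    norm_summable (fun X => (ha X).trans (haA X)) hC hlim
  refine h.congr' ?_
  filter_upwards [eventually_gt_atTop 0] with X hX
  rw [eq_tsum_neg_one_pow_card_mul_of_eq_tsum ha (fun X hX => (haA X).trans (hC X hX)) hA hX]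

theorem tendsto_ncard_le_div_of_tendsto_ncard_mul_absNorm_sq_le_div {Q : Type*} {w : Q → ℝ}
    {c w₀ : ℝ} (hw₀ : 0 < w₀) (hw : ∀ q, w₀ ≤ w q)
    (hfin : ∀ X, {x : Q × (Ideal (𝓞 K))⁰ |
      w x.1 * (Ideal.absNorm (x.2 : Ideal (𝓞 K)) : ℝ) ^ 2 ≤ X}.Finite)
    (hlim : Tendsto (fun X : ℝ => ({x : Q × (Ideal (𝓞 K))⁰ |
      w x.1 * (Ideal.absNorm (x.2 : Ideal (𝓞 K)) : ℝ) ^ 2 ≤ X}.ncard : ℝ) / X) atTop (𝓝 c)) :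
    Tendsto (fun X : ℝ => ({q | w q ≤ X}.ncard : ℝ) / X) atTop (𝓝 (c / dedekindZetaTwo K)) := by
  let P (X : ℝ) : Set (Q × (Ideal (𝓞 K))⁰) :=
    {x | w x.1 * (Ideal.absNorm (x.2 : Ideal (𝓞 K)) : ℝ) ^ 2 ≤ X}
  have one_le_absNorm (I : (Ideal (𝓞 K))⁰) : 1 ≤ (Ideal.absNorm (I : Ideal (𝓞 K)) : ℝ) := by
    exact_mod_cast Ideal.absNorm_pos_of_nonZeroDivisors I
  have P_mono {X Y : ℝ} (hXY : X ≤ Y) : P X ⊆ P Y := fun x hx => le_trans hx hXY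
  have P_empty {X : ℝ} (hX : X < w₀) : P X = ∅ :=
    Set.eq_empty_of_forall_notMem fun x hx => (hX.trans_le (hw x.1)).not_ge
      ((le_mul_of_one_le_right (hw₀.le.trans (hw x.1)) (one_le_pow₀ (one_le_absNorm x.2))).trans hx)
  obtain ⟨C, hC⟩ := exists_forall_le_mul_of_tendsto_div (A := fun X => ((P X).ncard : ℝ))
    (fun X Y hXY => Nat.cast_le.2 (Set.ncard_le_ncard (P_mono hXY) (hfin Y))) hw₀
    (fun X hX => by simp [P_empty hX]) hlim
  refine tendsto_div_of_tendsto_tsum_div (fun X => Nat.cast_nonneg _) (fun X => ?_)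
    (fun X => Nat.cast_le.2 ?_) hC hlim
  · rw [ncard_eq_tsum_ncard_fiber (hfin X)]
    refine tsum_congr fun I => ?_
    simp only [Set.mem_ofPred_eq, le_div_iff₀ (pow_pos (zero_lt_one.trans_le (one_le_absNorm I)) 2)]
  · exact Set.ncard_le_ncard_of_injOn (fun q => (q, 1)) (fun q hq => by simpa [P] using hq)
      (Prod.mk_left_injective _).injOn (hfin X)

end Sieve

section ConeLattice

open NumberField.InfinitePlace NumberField.mixedEmbedding MeasureTheory
open NumberField.mixedEmbedding.euclidean NumberField.mixedEmbedding.fundamentalCone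

open scoped Pointwise

variable {K : Type*} [Field K] [NumberField K]

open Classical in
theorem tendsto_card_fundamentalCone_inter_div (M : Submodule ℤ (mixedSpace K))
    [DiscreteTopology M] [IsZLattice ℝ M] :
    Tendsto (fun X : ℝ =>
      (({v | v ∈ fundamentalCone K ∧ mixedEmbedding.norm v ≤ X} ∩ M).ncard : ℝ) / X) atTop
      (𝓝 (volume.real (normLeOne K) / ZLattice.covolume M)) := by
  have preimage_normLeOne : {x | x ∈ toMixed K ⁻¹' fundamentalCone K ∧
      mixedEmbedding.norm (toMixed K x) ≤ 1} = toMixed K ⁻¹' normLeOne K := by ext; simp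
  have h := ZLattice.covolume.tendsto_card_le_div' (ZLattice.comap ℝ M (toMixed K).toLinearMap)
    (F := fun x => mixedEmbedding.norm (toMixed K x)) (X := toMixed K ⁻¹' fundamentalCone K)
    (fun x r hx hr => by rwa [Set.mem_preimage, map_smul, smul_mem_iff_mem hr.ne'])
    (fun x r hr => by rw [map_smul, mixedEmbedding.norm_smul, euclidean.finrank, abs_of_nonneg hr])
    ((toMixed K).antilipschitz.isBounded_preimage (isBounded_normLeOne K))
    ((toMixed K).continuous.measurable (measurableSet_normLeOne K))
    (by
      rw [preimage_normLeOne, ← (toMixed K).coe_toHomeomorph, ← Homeomorph.preimage_frontier,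
        (toMixed K).coe_toHomeomorph, (volumePreserving_toMixed K).measure_preimage
          measurableSet_frontier.nullMeasurableSet, volume_frontier_normLeOne])
  rw [preimage_normLeOne, (volumePreserving_toMixed K).measureReal_preimage
    (measurableSet_normLeOne K).nullMeasurableSet,
    ZLattice.covolume_comap _ _ _ (volumePreserving_toMixed K)] at h
  refine h.congr fun X => ?_
  rw [Nat.card_coe_set_eq, ← Set.ncard_preimage_of_injective_subset_range (toMixed K).injective
    fun v _ => (toMixed K).surjective v]
  rfl

theorem finite_fundamentalCone_inter (M : Submodule ℤ (mixedSpace K)) [DiscreteTopology M] (X : ℝ) :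
    ({v | v ∈ fundamentalCone K ∧ mixedEmbedding.norm v ≤ X} ∩ M).Finite := by
  classical
  have hX : 0 < max X 1 := zero_lt_one.trans_le (le_max_right _ _)
  have : DiscreteTopology M.toAddSubgroup := ‹DiscreteTopology M›
  have lattice_finite : (max X 1 • normLeOne K ∩ M).Finite :=
    Metric.finite_isBounded_inter_isClosed ⟨‹DiscreteTopology M›⟩
      ((isBounded_normLeOne K).smul₀ _)
      (M.coe_toAddSubgroup ▸ AddSubgroup.isClosed_of_discrete)
  refine lattice_finite.subset fun v ⟨⟨hv, hvX⟩, hvM⟩ => ⟨?_, hvM⟩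
  rw [Set.mem_smul_set_iff_inv_smul_mem₀ hX.ne', mem_normLeOne]
  refine ⟨smul_mem_of_mem hv (inv_ne_zero hX.ne'), ?_⟩
  rw [mixedEmbedding.norm_smul, abs_of_pos (inv_pos.2 hX), inv_pow,
    inv_mul_le_iff₀ (by positivity), mul_one]
  calc mixedEmbedding.norm v ≤ max X 1 := hvX.trans (le_max_left _ _)
    _ ≤ max X 1 ^ finrank ℚ K := le_self_pow₀ (le_max_right _ _) finrank_pos.ne'

open Classical in
theorem covolume_div_covolume_eq_relIndex_of_mixedSpace (M₁ M₂ : Submodule ℤ (mixedSpace K))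
    [DiscreteTopology M₁] [IsZLattice ℝ M₁] [DiscreteTopology M₂] [IsZLattice ℝ M₂]
    (h : M₁ ≤ M₂) :
    ZLattice.covolume M₁ / ZLattice.covolume M₂ =
      M₁.toAddSubgroup.relIndex M₂.toAddSubgroup := by
  rw [← ZLattice.covolume_comap M₁ _ _ (volumePreserving_toMixed K),
    ← ZLattice.covolume_comap M₂ _ _ (volumePreserving_toMixed K),
    ZLattice.covolume_div_covolume_eq_relIndex' (ZLattice.comap ℝ M₁ (toMixed K).toLinearMap)
      (ZLattice.comap ℝ M₂ (toMixed K).toLinearMap) fun x hx => h hx]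
  let e : euclidean.mixedSpace K →+ mixedSpace K := (toMixed K).toLinearMap.toAddMonoidHom
  calc ((M₁.toAddSubgroup.comap e).relIndex (M₂.toAddSubgroup.comap e) : ℝ)
      = M₁.toAddSubgroup.relIndex ((M₂.toAddSubgroup.comap e).map e) := by
        rw [AddSubgroup.relIndex_comap]
    _ = M₁.toAddSubgroup.relIndex M₂.toAddSubgroup := by
        rw [AddSubgroup.map_comap_eq_self_of_surjective (toMixed K).surjective]

/-- The elements of `A ⊆ K` of norm at most `X` in absolute value whose image in the mixed space
lies in the fundamental cone for the action of the units modulo torsion. -/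
def conePoints (A : Set K) (X : ℝ) : Set K :=
  {x ∈ A | mixedEmbedding K x ∈ fundamentalCone K ∧ (|Algebra.norm ℚ x| : ℝ) ≤ X}

/-- The points of `A` in the fundamental cone have density `d` when counted by norm. -/
structure HasConeDensity (A : Set K) (d : ℝ) : Prop where
  finite (X : ℝ) : (conePoints A X).Finite
  tendsto : Tendsto (fun X : ℝ => ((conePoints A X).ncard : ℝ) / X) atTop (𝓝 d)

theorem conePoints_union (A B : Set K) (X : ℝ) :
    conePoints (A ∪ B) X = conePoints A X ∪ conePoints B X :=
  Set.sep_union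

theorem conePoints_mono {A B : Set K} (h : A ⊆ B) (X : ℝ) : conePoints A X ⊆ conePoints B X :=
  fun _ hx => ⟨h hx.1, hx.2⟩

theorem disjoint_conePoints {A B : Set K} (h : Disjoint A B) (X : ℝ) :
    Disjoint (conePoints A X) (conePoints B X) :=
  h.mono (fun _ hx => hx.1) fun _ hx => hx.1

theorem mixedEmbedding_neg_mem_fundamentalCone_iff {x : K} :
    mixedEmbedding K (-x) ∈ fundamentalCone K ↔ mixedEmbedding K x ∈ fundamentalCone K := by
  rw [map_neg, ← neg_one_smul ℝ, smul_mem_iff_mem (neg_ne_zero.2 one_ne_zero)]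

theorem conePoints_neg (A : Set K) (X : ℝ) : conePoints (-A) X = -conePoints A X := by
  have abs_norm_neg (x : K) : |Algebra.norm ℚ (-x)| = |Algebra.norm ℚ x| := by
    rw [← neg_one_mul, map_mul, ← map_one (algebraMap ℚ K), ← map_neg, Algebra.norm_algebraMap,
      abs_mul, abs_pow, abs_neg, abs_one, one_pow, one_mul]
  ext x
  simp only [conePoints, Set.mem_neg, Set.mem_ofPred_eq, mixedEmbedding_neg_mem_fundamentalCone_iff,
    ← Rat.cast_abs, abs_norm_neg]

namespace HasConeDensity

variable {A B : Set K} {a d : ℝ}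

theorem of_union (hAB : HasConeDensity (A ∪ B) d) (hA : HasConeDensity A a) (hdisj : Disjoint A B) :
    HasConeDensity B (d - a) where
  finite X := (hAB.finite X).subset (conePoints_mono Set.subset_union_right X)
  tendsto := (hAB.tendsto.sub hA.tendsto).congr fun X => by
    have hBfin := (hAB.finite X).subset (conePoints_mono Set.subset_union_right X)
    rw [conePoints_union, Set.ncard_union_eq (disjoint_conePoints hdisj X) (hA.finite X) hBfin,
      Nat.cast_add, add_div, add_sub_cancel_left]

theorem of_union_neg (h : HasConeDensity (A ∪ -A) d) (hdisj : Disjoint A (-A)) :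
    HasConeDensity A (d / 2) where
  finite X := (h.finite X).subset (conePoints_mono Set.subset_union_left X)
  tendsto := (h.tendsto.div_const 2).congr fun X => by
    have hAfin := (h.finite X).subset (conePoints_mono Set.subset_union_left X)
    rw [conePoints_union, Set.ncard_union_eq (disjoint_conePoints hdisj X) hAfin
      ((h.finite X).subset (conePoints_mono Set.subset_union_right X)), conePoints_neg,
      ← Set.image_neg_eq_neg, Set.ncard_image_of_injective _ neg_injective, Nat.cast_add]
    ring

theorem iUnion {ι : Type*} [Finite ι] {A : ι → Set K} (hA : ∀ i, HasConeDensity (A i) d)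
    (hdisj : Pairwise (Function.onFun Disjoint A)) :
    HasConeDensity (⋃ i, A i) (Nat.card ι * d) := by
  have conePoints_iUnion (X : ℝ) : conePoints (⋃ i, A i) X = ⋃ i, conePoints (A i) X := by
    ext x
    simp only [conePoints, Set.mem_iUnion, Set.mem_ofPred_eq, exists_and_right]
  have := Fintype.ofFinite ι
  refine ⟨fun X => conePoints_iUnion X ▸ Set.finite_iUnion fun i => (hA i).finite X, ?_⟩
  have hsum := tendsto_finsetSum Finset.univ fun i _ => (hA i).tendsto
  rw [Finset.sum_const, nsmul_eq_mul, Finset.card_univ, ← Nat.card_eq_fintype_card] at hsum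
  refine hsum.congr fun X => ?_
  rw [conePoints_iUnion, Set.ncard_iUnion_of_finite (fun i => (hA i).finite X)
    fun i j hij => disjoint_conePoints (hdisj hij) X,
    finsum_eq_sum_of_fintype, Nat.cast_sum, Finset.sum_div]

end HasConeDensity

end ConeLattice

section DoubledSubgroup

open scoped Pointwise

variable {G : Type*} [AddCommGroup G] {H : AddSubgroup G} {z : G}

theorem mem_sup_zmultiples_iff (hzz : z + z ∈ H) {x : G} :
    x ∈ H ⊔ AddSubgroup.zmultiples z ↔ x ∈ H ∨ x - z ∈ H := by
  have even_zsmul_mem (k : ℤ) : (k + k) • z ∈ H := by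
    rw [add_smul, ← smul_add]
    exact H.zsmul_mem hzz k
  simp only [AddSubgroup.mem_sup, AddSubgroup.mem_zmultiples_iff]
  constructor
  · rintro ⟨y, hy, _, ⟨k, rfl⟩, rfl⟩
    obtain ⟨m, rfl⟩ | ⟨m, rfl⟩ := Int.even_or_odd k
    · exact Or.inl (H.add_mem hy (even_zsmul_mem m))
    · rw [add_smul, one_smul, two_mul, ← add_assoc, add_sub_cancel_right]
      exact Or.inr (H.add_mem hy (even_zsmul_mem m))
  · rintro (hx | hx)
    · exact ⟨x, hx, 0, ⟨0, zero_smul _ _⟩, add_zero x⟩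
    · exact ⟨x - z, hx, z, ⟨1, one_smul _ _⟩, sub_add_cancel x z⟩

theorem relIndex_sup_zmultiples (hz : z ∉ H) (hzz : z + z ∈ H) :
    H.relIndex (H ⊔ AddSubgroup.zmultiples z) = 2 := by
  refine AddSubgroup.relIndex_eq_two_iff.2
    ⟨z, (le_sup_right : AddSubgroup.zmultiples z ≤ _) (AddSubgroup.mem_zmultiples z),
      fun x hx => ?_⟩
  obtain hx | hx := (mem_sup_zmultiples_iff hzz).1 hx
  · exact Or.inr ⟨hx, fun h => hz ((H.add_mem_cancel_left hx).1 h)⟩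
  · refine Or.inl ⟨?_, fun h => hz ?_⟩
    · rw [← sub_add_add_cancel x z z]
      exact H.add_mem hx hzz
    · rw [← sub_sub_cancel x z]
      exact H.sub_mem h hx

theorem setOf_sub_mem_sup_zmultiples (h : z + z + (z + z) ∈ H) :
    {x | x - z ∈ H ⊔ AddSubgroup.zmultiples (z + z)} = {x | x - z ∈ H} ∪ -{x | x - z ∈ H} := by
  ext x
  refine (mem_sup_zmultiples_iff h).trans (or_congr_right ?_)
  rw [Set.mem_neg, Set.mem_ofPred_eq, ← neg_mem_iff (x := -x - z), ← H.add_mem_cancel_right h]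
  abel_nf

theorem disjoint_setOf_sub_mem_neg (hzz : z + z ∉ H) :
    Disjoint {x | x - z ∈ H} (-{x | x - z ∈ H}) := by
  refine Set.disjoint_left.2 fun x (hx : x - z ∈ H) (hnx : -x - z ∈ H) => hzz ?_
  have := H.add_mem hx hnx
  rw [← neg_mem_iff]
  convert this using 1
  abel

end DoubledSubgroup

section ConeCoset

open NumberField.InfinitePlace NumberField.mixedEmbedding MeasureTheory
open NumberField.mixedEmbedding.fundamentalCone

open scoped Pointwise

variable {K : Type*} [Field K] [NumberField K]

open Classical in
/-- The density, counted by norm, of the points of the fractional ideal `I` in the fundamental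
cone. -/
noncomputable def coneDensity (I : (FractionalIdeal (𝓞 K)⁰ K)ˣ) : ℝ :=
  volume.real (normLeOne K) / ZLattice.covolume (idealLattice K I)

variable {I J : (FractionalIdeal (𝓞 K)⁰ K)ˣ} {L : AddSubgroup K}

theorem hasConeDensity_addSubgroup (hIL : I.1.coeToSubmodule.toAddSubgroup ≤ L)
    (hLJ : L ≤ J.1.coeToSubmodule.toAddSubgroup) :
    HasConeDensity (L : Set K)
      (coneDensity I * I.1.coeToSubmodule.toAddSubgroup.relIndex L) := by
  classical
  let e : K →+ mixedSpace K := (mixedEmbedding K).toAddMonoidHom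
  have he : Function.Injective e := mixedEmbedding_injective K
  let M : Submodule ℤ (mixedSpace K) := (L.map e).toIntSubmodule
  have map_eq_idealLattice (Q : (FractionalIdeal (𝓞 K)⁰ K)ˣ) :
      Q.1.coeToSubmodule.toAddSubgroup.map e = (idealLattice K Q).toAddSubgroup := by
    ext x
    exact (mem_idealLattice K Q).symm
  have hIM : idealLattice K I ≤ M := fun x hx =>
    AddSubgroup.map_mono hIL (map_eq_idealLattice I ▸ hx)
  have hMJ : M ≤ idealLattice K J := fun x hx =>
    (map_eq_idealLattice J).le (AddSubgroup.map_mono hLJ hx)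
  have : DiscreteTopology M :=
    DiscreteTopology.of_subset (s := (idealLattice K J : Set (mixedSpace K)))
      (inferInstanceAs (DiscreteTopology (idealLattice K J))) hMJ
  have : IsZLattice ℝ M :=
    ⟨top_unique (IsZLattice.span_top (K := ℝ) (L := idealLattice K I) ▸ Submodule.span_mono hIM)⟩
  have image_conePoints (X : ℝ) : e '' conePoints (L : Set K) X =
      {v | v ∈ fundamentalCone K ∧ mixedEmbedding.norm v ≤ X} ∩ M := by
    ext v
    constructor
    · rintro ⟨x, ⟨hxL, hx, hxX⟩, rfl⟩
      exact ⟨⟨hx, (mixedEmbedding.norm_eq_norm x).trans_le (by exact_mod_cast hxX)⟩, x, hxL, rfl⟩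
    · rintro ⟨⟨hx, hxX⟩, x, hxL, rfl⟩
      exact ⟨x, ⟨hxL, hx, by exact_mod_cast (mixedEmbedding.norm_eq_norm x).symm.trans_le hxX⟩, rfl⟩
  have hindex : ZLattice.covolume (idealLattice K I) / ZLattice.covolume M =
      I.1.coeToSubmodule.toAddSubgroup.relIndex L := by
    rw [covolume_div_covolume_eq_relIndex_of_mixedSpace _ _ hIM, ← map_eq_idealLattice]
    exact congrArg Nat.cast (AddSubgroup.relIndex_map_map_of_injective _ _ he)
  refine ⟨fun X => Set.Finite.of_finite_image (f := e) ?_ he.injOn, ?_⟩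
  · rw [image_conePoints]
    exact finite_fundamentalCone_inter M X
  · rw [← hindex, coneDensity, div_mul_div_cancel₀ (ZLattice.covolume_ne_zero _ volume)]
    refine (tendsto_card_fundamentalCone_inter_div M).congr fun X => ?_
    rw [← image_conePoints, Set.ncard_image_of_injective _ he]

theorem hasConeDensity_coset_of_add_self_mem {z : K} (hIL : I.1.coeToSubmodule.toAddSubgroup ≤ L)
    (hLJ : L ≤ J.1.coeToSubmodule.toAddSubgroup) (hzJ : z ∈ J.1) (hz : z ∉ L) (hzz : z + z ∈ L) :
    HasConeDensity {x | x - z ∈ L}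
      (coneDensity I * I.1.coeToSubmodule.toAddSubgroup.relIndex L) := by
  have hL := hasConeDensity_addSubgroup hIL hLJ
  have hsup := hasConeDensity_addSubgroup (hIL.trans (le_sup_left : L ≤ L ⊔ .zmultiples z))
    (sup_le hLJ (AddSubgroup.zmultiples_le_of_mem hzJ))
  have union_coset :
      ((L ⊔ .zmultiples z : AddSubgroup K) : Set K) = (L : Set K) ∪ {x | x - z ∈ L} :=
    Set.ext fun x => mem_sup_zmultiples_iff hzz
  have hdisj : Disjoint (L : Set K) {x | x - z ∈ L} :=
    Set.disjoint_left.2 fun x hx hxz => hz (sub_sub_cancel x z ▸ L.sub_mem hx hxz)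
  rw [union_coset, ← AddSubgroup.relIndex_mul_relIndex _ _ _ hIL le_sup_left,
    relIndex_sup_zmultiples hz hzz] at hsup
  convert hsup.of_union hL hdisj using 1
  push_cast
  ring

/-- If neither `z` nor `2z` lies in `I`, the coset `z + I` and its negative partition a coset of
the lattice `I + 2ℤz`; they have equally many points in the cone, which is stable under `-1`. -/
theorem hasConeDensity_coset {z : K} (hIJ : I.1 ≤ J.1) (hzJ : z ∈ J.1) (hz : 4 * z ∈ I.1) :
    HasConeDensity {x | x - z ∈ I.1} (coneDensity I) := by
  set H : AddSubgroup K := I.1.coeToSubmodule.toAddSubgroup with hH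
  have hHJ : H ≤ J.1.coeToSubmodule.toAddSubgroup := hIJ
  change HasConeDensity {x | x - z ∈ H} (coneDensity I)
  by_cases hzI : z ∈ H
  · have coset_eq : {x | x - z ∈ H} = (H : Set K) := Set.ext fun x => by
      simpa only [Set.mem_ofPred_eq, SetLike.mem_coe, sub_eq_add_neg] using
        H.add_mem_cancel_right (H.neg_mem hzI)
    have := hasConeDensity_addSubgroup le_rfl hHJ
    rwa [← hH, AddSubgroup.relIndex_self, Nat.cast_one, mul_one, ← coset_eq] at this
  by_cases hzzI : z + z ∈ H
  · have := hasConeDensity_coset_of_add_self_mem le_rfl hHJ hzJ hzI hzzI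
    rwa [← hH, AddSubgroup.relIndex_self, Nat.cast_one, mul_one] at this
  have h4 : z + z + (z + z) ∈ H := by
    rw [← two_mul, ← two_mul, ← mul_assoc]
    norm_num
    exact hz
  have mem_L {x : K} := mem_sup_zmultiples_iff (x := x) h4
  have hzL : z ∉ H ⊔ .zmultiples (z + z) := by
    rw [mem_L, sub_add_cancel_left, neg_mem_iff, or_self]
    exact hzI
  have hzzL : z + z ∈ H ⊔ .zmultiples (z + z) := mem_L.2 (Or.inr (sub_self (z + z) ▸ H.zero_mem))
  have hL := hasConeDensity_coset_of_add_self_mem le_sup_left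
    (sup_le hHJ (AddSubgroup.zmultiples_le_of_mem (add_mem hzJ hzJ))) hzJ hzL hzzL
  rw [setOf_sub_mem_sup_zmultiples h4, relIndex_sup_zmultiples hzzI h4] at hL
  convert hL.of_union_neg (disjoint_setOf_sub_mem_neg hzzI) using 1
  rw [Nat.cast_ofNat, mul_div_cancel_right₀ _ two_ne_zero]

end ConeCoset

section IndexOfPowers

theorem index_range_nsmulAddMonoidHom_pi_int {ι : Type*} [Fintype ι] (n : ℕ) :
    (nsmulAddMonoidHom (α := ι → ℤ) n).range.index = n ^ Fintype.card ι := by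
  have range_eq_pi : (nsmulAddMonoidHom (α := ι → ℤ) n).range =
      AddSubgroup.pi Set.univ fun _ => AddSubgroup.zmultiples (n : ℤ) := by
    ext f
    simp only [AddMonoidHom.mem_range, nsmulAddMonoidHom_apply, AddSubgroup.mem_pi, Set.mem_univ,
      true_imp_iff, Int.mem_zmultiples_iff]
    refine ⟨?_, fun h => ⟨fun i => f i / n, funext fun i => ?_⟩⟩
    · rintro ⟨g, rfl⟩ i
      exact ⟨g i, nsmul_eq_mul _ _⟩
    · rw [Pi.smul_apply, nsmul_eq_mul, Int.mul_ediv_cancel' (h i)]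
  rw [range_eq_pi, AddSubgroup.index_pi, Finset.prod_const, Int.index_zmultiples,
    Int.natAbs_natCast, Finset.card_univ]

theorem index_range_nsmulAddMonoidHom_of_free (M : Type*) [AddCommGroup M] [Module.Free ℤ M]
    [Module.Finite ℤ M] (n : ℕ) :
    (nsmulAddMonoidHom (α := M) n).range.index = n ^ finrank ℤ M := by
  let e : M ≃+ (Free.ChooseBasisIndex ℤ M → ℤ) := (Free.chooseBasis ℤ M).equivFun.toAddEquiv
  rw [finrank_eq_card_chooseBasisIndex, ← index_range_nsmulAddMonoidHom_pi_int,
    ← e.map_range_nsmulAddMonoidHom]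
  exact (AddSubgroup.index_map_equiv _ e).symm

variable (K : Type*) [Field K]

open NumberField.Units

theorem subgroupOf_torsion_range_powMonoidHom_two :
    (powMonoidHom (α := (𝓞 K)ˣ) 2).range.subgroupOf (torsion K) =
      (powMonoidHom (α := torsion K) 2).range := by
  ext ⟨ζ, hζ⟩
  rw [Subgroup.mem_subgroupOf]
  constructor
  · rintro ⟨u, rfl⟩
    have hu : u ∈ torsion K := (CommGroup.mem_torsion _).2
      (isOfFinOrder_pow.1 ((CommGroup.mem_torsion _).1 hζ) |>.resolve_right two_ne_zero)
    exact ⟨⟨u, hu⟩, rfl⟩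
  · rintro ⟨v, hv⟩
    exact ⟨v, congrArg Subtype.val hv⟩

variable [NumberField K]

theorem index_range_powMonoidHom_two_sup_torsion :
    ((powMonoidHom (α := (𝓞 K)ˣ) 2).range ⊔ torsion K).index = 2 ^ rank K := by
  have range_map : ((powMonoidHom (α := (𝓞 K)ˣ) 2).range.map (QuotientGroup.mk' (torsion K))) =
      (powMonoidHom (α := (𝓞 K)ˣ ⧸ torsion K) 2).range := by
    ext x
    rw [Subgroup.mem_map]
    constructor
    · rintro ⟨_, ⟨u, rfl⟩, rfl⟩
      exact ⟨u, rfl⟩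
    · rintro ⟨y, rfl⟩
      obtain ⟨u, rfl⟩ := QuotientGroup.mk'_surjective _ y
      exact ⟨u ^ 2, ⟨u, rfl⟩, rfl⟩
  have hindex := Subgroup.index_map (powMonoidHom (α := (𝓞 K)ˣ) 2).range
    (QuotientGroup.mk' (torsion K))
  rw [range_map, QuotientGroup.ker_mk', MonoidHom.range_eq_top.2 (QuotientGroup.mk'_surjective _),
    Subgroup.index_top, mul_one] at hindex
  rw [← hindex, ← finrank_modTorsion]
  exact index_range_nsmulAddMonoidHom_of_free (Additive ((𝓞 K)ˣ ⧸ torsion K)) 2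

theorem index_range_powMonoidHom_two_units :
    (powMonoidHom (α := (𝓞 K)ˣ) 2).range.index =
      2 ^ (InfinitePlace.nrRealPlaces K + InfinitePlace.nrComplexPlaces K) := by
  rw [← Subgroup.relIndex_mul_index (le_sup_left : _ ≤ _ ⊔ torsion K),
    index_range_powMonoidHom_two_sup_torsion, Subgroup.relIndex_sup_left, Subgroup.relIndex,
    subgroupOf_torsion_range_powMonoidHom_two, IsCyclic.index_powMonoidHom_range,
    Nat.gcd_eq_right (m := Nat.card (torsion K)) (even_torsionOrder K).two_dvd, ← pow_succ',
    ← InfinitePlace.card_eq_nrRealPlaces_add_nrComplexPlaces, rank, Nat.sub_add_cancel]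
  exact Fintype.card_pos

end IndexOfPowers

section SquaresModFour

variable {K : Type*} [Field K]

theorem unit_mul_mem_iff {u : (𝓞 K)ˣ} {q : FractionalIdeal (𝓞 K)⁰ K} {x : K} :
    (u : K) * x ∈ q ↔ x ∈ q :=
  Submodule.smul_mem_iff_of_isUnit (q : Submodule (𝓞 K) K) u.isUnit

variable [NumberField K]

theorem half_sub_mem_iff {q : FractionalIdeal (𝓞 K)⁰ K} (hq : q ≠ 0) {x y : K} (hy : y ∈ q) :
    (x - y) / 2 ∈ q ↔ (x ^ 2 - y ^ 2) / 4 ∈ q * q := by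
  constructor
  · intro h
    rw [show (x ^ 2 - y ^ 2) / 4 = (x - y) / 2 * ((x - y) / 2 + y) by ring]
    exact FractionalIdeal.mul_mem_mul h (q.coeToSubmodule.add_mem h hy)
  · intro h
    rw [← inv_inv q, FractionalIdeal.mem_inv_iff (inv_ne_zero hq)]
    intro s hs
    have integral_mul_y : IsIntegral ℤ (-(s * y)) :=
      (mem_one_iff_isIntegral.1 ((FractionalIdeal.mem_inv_iff hq).1 hs y hy)).neg
    have integral_mul_sq_sub_sq : IsIntegral ℤ (-(s * s * ((x ^ 2 - y ^ 2) / 4))) := by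
      rw [IsIntegral.neg_iff, ← mem_one_iff_isIntegral,
        show (1 : FractionalIdeal (𝓞 K)⁰ K) = q⁻¹ * q⁻¹ * (q * q) by field_simp]
      exact FractionalIdeal.mul_mem_mul (FractionalIdeal.mul_mem_mul hs hs) h
    refine mem_one_iff_isIntegral.2 (isIntegral_of_sq_sub_mul_add_eq_zero (L := K) integral_mul_y
      integral_mul_sq_sub_sq ?_)
    simp only [Algebra.algebraMap_self, RingHom.id_apply]
    ring

/-- The fractional ideal `4𝔮²`. -/
noncomputable def fourMulSq (q : (FractionalIdeal (𝓞 K)⁰ K)ˣ) : (FractionalIdeal (𝓞 K)⁰ K)ˣ :=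
  Units.mk0 (FractionalIdeal.spanSingleton (𝓞 K)⁰ (4 : K))
    (FractionalIdeal.spanSingleton_ne_zero_iff.2 (OfNat.ofNat_ne_zero 4)) * (q * q)

theorem mem_fourMulSq {q : (FractionalIdeal (𝓞 K)⁰ K)ˣ} {x : K} :
    x ∈ (fourMulSq q).1 ↔ x / 4 ∈ q.1 * q.1 := by
  rw [div_eq_inv_mul, ← mem_spanSingleton_mul_iff (OfNat.ofNat_ne_zero 4)]
  rfl

theorem absNorm_fourMulSq (q : (FractionalIdeal (𝓞 K)⁰ K)ˣ) :
    FractionalIdeal.absNorm (fourMulSq q).1 =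
      4 ^ finrank ℚ K * FractionalIdeal.absNorm q.1 ^ 2 := by
  have norm_four : Algebra.norm ℚ (4 : K) = 4 ^ finrank ℚ K := by
    simpa using Algebra.norm_algebraMap (R := ℚ) (S := K) 4
  rw [fourMulSq, Units.val_mul, Units.val_mul, Units.val_mk0, map_mul, map_mul,
    FractionalIdeal.absNorm_span_singleton, norm_four, abs_of_nonneg (by positivity), sq]

theorem coneDensity_eq (I : (FractionalIdeal (𝓞 K)⁰ K)ˣ) :
    coneDensity I = dedekindZeta_residue K * Units.torsionOrder K /
      (classNumber K * FractionalIdeal.absNorm I.1) := by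
  classical
  have hI : (FractionalIdeal.absNorm I.1 : ℝ) ≠ 0 :=
    Rat.cast_ne_zero.2 (FractionalIdeal.absNorm_eq_zero_iff.not.2 I.ne_zero)
  have hd : √|(discr K : ℝ)| ≠ 0 := Real.sqrt_ne_zero'.2
    (abs_pos.2 (Int.cast_ne_zero.2 (discr_ne_zero K)))
  have hh : (classNumber K : ℝ) ≠ 0 := Nat.cast_ne_zero.2 (classNumber_ne_zero K)
  have hw : (Units.torsionOrder K : ℝ) ≠ 0 := Nat.cast_ne_zero.2 (Units.torsionOrder_ne_zero K)
  rw [coneDensity, MeasureTheory.measureReal_def, mixedEmbedding.fundamentalCone.volume_normLeOne,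
    mixedEmbedding.covolume_idealLattice, dedekindZeta_residue_def, ENNReal.toReal_mul,
    ENNReal.toReal_mul, ENNReal.toReal_pow, ENNReal.toReal_pow, ENNReal.toReal_ofNat,
    ENNReal.coe_toReal, NNReal.coe_real_pi, ENNReal.toReal_ofReal (Units.regulator_pos K).le,
    mul_pow, inv_pow]
  field_simp

/-- The finite group `𝔮/2𝔮`. -/
abbrev ModTwo (q : FractionalIdeal (𝓞 K)⁰ K) : Type _ :=
  (q : Submodule (𝓞 K) K) ⧸ (nsmulAddMonoidHom (α := (q : Submodule (𝓞 K) K)) 2).range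

theorem card_modTwo (q : (FractionalIdeal (𝓞 K)⁰ K)ˣ) :
    Nat.card (ModTwo q.1) = 2 ^ finrank ℚ K := by
  rw [← RingOfIntegers.rank, ← fractionalIdeal_rank]
  exact index_range_nsmulAddMonoidHom_of_free q.1 2

instance (q : (FractionalIdeal (𝓞 K)⁰ K)ˣ) : Finite (ModTwo q.1) :=
  Nat.finite_of_card_ne_zero (by rw [card_modTwo]; positivity)

theorem modTwo_mk_eq_iff {q : FractionalIdeal (𝓞 K)⁰ K} (hq : q ≠ 0)
    {σ τ : (q : Submodule (𝓞 K) K)} :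
    (σ : ModTwo q) = τ ↔ ((σ : K) ^ 2 - τ ^ 2) / 4 ∈ q * q := by
  rw [← half_sub_mem_iff hq τ.2, eq_comm, QuotientAddGroup.eq, ← sub_eq_neg_add]
  refine ⟨?_, fun h => ⟨⟨_, h⟩, Subtype.ext ?_⟩⟩
  · rintro ⟨ρ, hρ⟩
    have hρK : (2 : ℕ) • (ρ : K) = σ - τ := congrArg Subtype.val hρ
    rw [← hρK, nsmul_eq_mul, Nat.cast_ofNat, mul_div_cancel_left₀ _ two_ne_zero]
    exact ρ.2
  · change (2 : ℕ) • (((σ : K) - τ) / 2) = σ - τ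
    rw [nsmul_eq_mul, Nat.cast_ofNat, mul_div_cancel₀ _ two_ne_zero]

theorem unit_mul_sub_div_four_mem_iff {q : (FractionalIdeal (𝓞 K)⁰ K)ˣ} {u : (𝓞 K)ˣ} {x y : K} :
    (u * x - y) / 4 ∈ q.1 * q.1 ↔ x - (u⁻¹ : (𝓞 K)ˣ) * y ∈ (fourMulSq q).1 := by
  rw [← mem_fourMulSq, ← unit_mul_mem_iff (u := u⁻¹), mul_sub, ← mul_assoc]
  simp

theorem setOf_unit_mul_mem_squaresModFour (q : (FractionalIdeal (𝓞 K)⁰ K)ˣ) (u : (𝓞 K)ˣ) :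
    {x : K | u * x ∈ squaresModFour q.1} =
      ⋃ c : ModTwo q.1, {x : K | x - (u⁻¹ : (𝓞 K)ˣ) * (c.out : K) ^ 2 ∈ (fourMulSq q).1} := by
  ext x
  simp only [Set.mem_iUnion, Set.mem_ofPred_eq, ← unit_mul_sub_div_four_mem_iff]
  refine ⟨?_, fun ⟨c, hc⟩ => ⟨c.out, c.out.2, hc⟩⟩
  rintro ⟨σ, hσ, hx⟩
  let c : ModTwo q.1 := QuotientAddGroup.mk ⟨σ, hσ⟩
  have hout : (σ ^ 2 - (c.out : K) ^ 2) / 4 ∈ q.1 * q.1 :=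
    (modTwo_mk_eq_iff q.ne_zero).1 (QuotientAddGroup.out_eq' c).symm
  refine ⟨c, ?_⟩
  rw [← sub_add_sub_cancel _ (σ ^ 2), add_div]
  exact (q.1 * q.1).coeToSubmodule.add_mem hx hout

theorem pairwise_disjoint_setOf_sub_sq_mem_fourMulSq (q : (FractionalIdeal (𝓞 K)⁰ K)ˣ)
    (u : (𝓞 K)ˣ) :
    Pairwise (Function.onFun Disjoint fun c : ModTwo q.1 =>
      {x : K | x - (u⁻¹ : (𝓞 K)ˣ) * (c.out : K) ^ 2 ∈ (fourMulSq q).1}) := by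
  refine fun c d hcd => Set.disjoint_left.2 fun x hc hd => hcd ?_
  rw [Set.mem_ofPred_eq, ← unit_mul_sub_div_four_mem_iff] at hc hd
  rw [← QuotientAddGroup.out_eq' c, ← QuotientAddGroup.out_eq' d,
    modTwo_mk_eq_iff q.ne_zero, ← sub_sub_sub_cancel_left _ _ (u * x), sub_div]
  exact (q.1 * q.1).coeToSubmodule.sub_mem hd hc

theorem fourMulSq_le (q : (FractionalIdeal (𝓞 K)⁰ K)ˣ) : (fourMulSq q).1 ≤ (q * q).1 := by
  intro y hy
  have hy4 := (q.1 * q.1).coeToSubmodule.smul_mem (4 : 𝓞 K) (mem_fourMulSq.1 hy)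
  rwa [Algebra.smul_def, map_ofNat, mul_div_cancel₀ _ (OfNat.ofNat_ne_zero 4)] at hy4

theorem hasConeDensity_unit_mul_mem_squaresModFour (q : (FractionalIdeal (𝓞 K)⁰ K)ˣ)
    (u : (𝓞 K)ˣ) :
    HasConeDensity {x : K | u * x ∈ squaresModFour q.1}
      (2 ^ finrank ℚ K * coneDensity (fourMulSq q)) := by
  have four_mul_mem {y : K} (hy : y ∈ (q * q).1) : 4 * y ∈ (fourMulSq q).1 := by
    rwa [mem_fourMulSq, mul_div_cancel_left₀ _ (OfNat.ofNat_ne_zero 4)]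
  have sq_mem (c : ModTwo q.1) : (u⁻¹ : (𝓞 K)ˣ) * (c.out : K) ^ 2 ∈ (q * q).1 :=
    unit_mul_mem_iff.2 (sq (c.out : K) ▸ FractionalIdeal.mul_mem_mul c.out.2 c.out.2)
  have hunion := HasConeDensity.iUnion
    (fun c => hasConeDensity_coset (fourMulSq_le q) (sq_mem c) (four_mul_mem (sq_mem c)))
    (pairwise_disjoint_setOf_sub_sq_mem_fourMulSq q u)
  rwa [card_modTwo, Nat.cast_pow, Nat.cast_ofNat, ← setOf_unit_mul_mem_squaresModFour] at hunion

end SquaresModFour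

section UnitSquareClasses

open NumberField.Units mixedEmbedding mixedEmbedding.fundamentalCone

variable {K : Type*} [Field K]

variable (K) in
/-- The squares of units of `𝓞 K`, as a subgroup of `Kˣ`. -/
def unitSquares : Subgroup Kˣ :=
  (powMonoidHom (α := (𝓞 K)ˣ) 2).range.map (Units.map (algebraMap (𝓞 K) K))

variable (K) in
/-- Nonzero elements of `K` up to squares of units. A class `c` is represented by `c.out`. -/
abbrev UnitSquareClass : Type _ := Kˣ ⧸ unitSquares K

variable (K) in
/-- The group `U/U²`, where `U` is the unit group of `𝓞 K`. -/
abbrev UnitsModSquares : Type _ := (𝓞 K)ˣ ⧸ (powMonoidHom (α := (𝓞 K)ˣ) 2).range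

theorem unitsModSquares_mk_eq_iff {s t : (𝓞 K)ˣ} :
    (s : UnitsModSquares K) = t ↔ ∃ u : (𝓞 K)ˣ, t = u ^ 2 * s := by
  simp only [QuotientGroup.eq, MonoidHom.mem_range, powMonoidHom_apply]
  exact exists_congr fun u => by rw [eq_inv_mul_iff_mul_eq, mul_comm s, eq_comm]

theorem unitSquareClass_mk_eq_iff {x y : Kˣ} :
    (x : UnitSquareClass K) = y ↔ ∃ u : (𝓞 K)ˣ, (y : K) = u ^ 2 * x := by
  rw [QuotientGroup.eq]
  constructor
  · rintro ⟨_, ⟨u, rfl⟩, hu⟩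
    have hy : y = Units.map (algebraMap (𝓞 K) K) (u ^ 2) * x := by
      rw [mul_comm]
      exact eq_mul_of_inv_mul_eq hu.symm
    exact ⟨u, by simp [hy]⟩
  · rintro ⟨u, hu⟩
    refine ⟨u ^ 2, ⟨u, rfl⟩, Units.ext ?_⟩
    simp [hu, mul_comm]

theorem exists_out_eq_sq_mul (x : Kˣ) :
    ∃ u : (𝓞 K)ˣ, ((x : UnitSquareClass K).out : K) = u ^ 2 * x :=
  unitSquareClass_mk_eq_iff.1 (QuotientGroup.out_eq' _).symm

theorem unitSquareClass_eq_iff {c d : UnitSquareClass K} :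
    c = d ↔ ∃ u : (𝓞 K)ˣ, (d.out : K) = u ^ 2 * c.out := by
  rw [← unitSquareClass_mk_eq_iff, QuotientGroup.out_eq', QuotientGroup.out_eq']

theorem eq_of_unit_mul_out_eq {c d : UnitSquareClass K} {s t : (𝓞 K)ˣ}
    (hst : (s : UnitsModSquares K) = t) (h : s * (c.out : K) = t * d.out) : c = d ∧ s = t := by
  obtain ⟨u, rfl⟩ := unitsModSquares_mk_eq_iff.1 hst
  have hdc : (c.out : K) = u ^ 2 * d.out :=
    mul_left_cancel₀ (coe_ne_zero s) (by rw [h]; push_cast; ring)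
  obtain rfl : c = d := (unitSquareClass_eq_iff.2 ⟨u, hdc⟩).symm
  exact ⟨rfl, Units.ext (RingOfIntegers.ext (mul_right_cancel₀ c.out.ne_zero h))⟩

/-- `A` is stable under multiplication by squares of units. -/
def UnitSquareInvariant (A : Set K) : Prop :=
  ∀ (u : (𝓞 K)ˣ) (x : K), u ^ 2 * x ∈ A ↔ x ∈ A

variable {A : Set K}

theorem out_mul_unit_mul_mem_iff (hA : UnitSquareInvariant A)
    {s : (𝓞 K)ˣ} {x : K} : ((s : UnitsModSquares K).out : K) * (s * x) ∈ A ↔ x ∈ A := by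
  obtain ⟨u, hu⟩ := unitsModSquares_mk_eq_iff.1 (QuotientGroup.out_eq' (s : UnitsModSquares K)).symm
  rw [hu, ← hA (u * s) x]
  push_cast
  ring_nf

variable [NumberField K]

variable (K) in
theorem card_unitsModSquares : Nat.card (UnitsModSquares K) =
    2 ^ (InfinitePlace.nrRealPlaces K + InfinitePlace.nrComplexPlaces K) :=
  index_range_powMonoidHom_two_units K

instance : Finite (UnitsModSquares K) :=
  Nat.finite_of_card_ne_zero (by rw [card_unitsModSquares]; positivity)

theorem exists_unit_mul_mem_fundamentalCone {x : K} (hx : x ≠ 0) :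
    ∃ u : (𝓞 K)ˣ, mixedEmbedding K (u * x) ∈ fundamentalCone K := by
  obtain ⟨u, hu⟩ := exists_unit_smul_mem (x := mixedEmbedding K x) (by simpa)
  exact ⟨u, by rwa [map_mul]⟩

theorem unit_mul_mem_fundamentalCone_iff {x : K} (hx : mixedEmbedding K x ∈ fundamentalCone K)
    {u : (𝓞 K)ˣ} : mixedEmbedding K (u * x) ∈ fundamentalCone K ↔ u ∈ torsion K := by
  rw [← unit_smul_mem_iff_mem_torsion hx, map_mul]
  rfl

theorem ne_zero_of_mixedEmbedding_mem_fundamentalCone {x : K}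
    (hx : mixedEmbedding K x ∈ fundamentalCone K) : x ≠ 0 := by
  rintro rfl
  simpa using norm_pos_of_mem hx

theorem abs_norm_unit_mul (u : (𝓞 K)ˣ) (x : K) :
    |Algebra.norm ℚ (u * x)| = |Algebra.norm ℚ x| := by
  rw [map_mul, abs_mul, Units.norm, one_mul]

/-- The classes of elements of `A` of norm at most `X` in absolute value. This is only
meaningful when `A` is stable under multiplication by squares of units. -/
def classesIn (A : Set K) (X : ℝ) : Set (UnitSquareClass K) :=
  {c | (c.out : K) ∈ A ∧ (|Algebra.norm ℚ (c.out : K)| : ℝ) ≤ X}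

theorem mk_mem_classesIn_iff (hA : UnitSquareInvariant A)
    {X : ℝ} {x : Kˣ} : (x : UnitSquareClass K) ∈ classesIn A X ↔
      (x : K) ∈ A ∧ (|Algebra.norm ℚ (x : K)| : ℝ) ≤ X := by
  obtain ⟨u, hu⟩ := exists_out_eq_sq_mul x
  rw [classesIn, Set.mem_ofPred_eq, hu, hA, sq, mul_assoc]
  simp only [← Rat.cast_abs, abs_norm_unit_mul]

theorem unit_mul_mem_conePoints {X : ℝ} {c : UnitSquareClass K}
    (hA : UnitSquareInvariant A) (hc : c ∈ classesIn A X) {s : (𝓞 K)ˣ}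
    (hs : mixedEmbedding K (s * c.out) ∈ fundamentalCone K) :
    s * (c.out : K) ∈ conePoints {x : K | (s : UnitsModSquares K).out * x ∈ A} X :=
  ⟨(out_mul_unit_mul_mem_iff hA).2 hc.1, hs, by
    simpa only [← Rat.cast_abs, abs_norm_unit_mul] using hc.2⟩

theorem exists_unit_mul_out_eq {κ : UnitsModSquares K} {x : K} {X : ℝ}
    (hA : UnitSquareInvariant A)
    (hx : x ∈ conePoints {x : K | κ.out * x ∈ A} X) :
    ∃ c ∈ classesIn A X, ∃ s : (𝓞 K)ˣ, s = κ ∧ s * (c.out : K) = x := by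
  have hx₀ : x ≠ 0 := ne_zero_of_mixedEmbedding_mem_fundamentalCone hx.2.1
  let y : Kˣ := Units.map (algebraMap (𝓞 K) K) κ.out * Units.mk0 x hx₀
  have hy : (y : K) = κ.out * x := rfl
  obtain ⟨u, hu⟩ := exists_out_eq_sq_mul y
  refine ⟨y, (mk_mem_classesIn_iff hA).2 ⟨hx.1, ?_⟩, (u ^ 2 * κ.out)⁻¹, ?_, ?_⟩
  · simpa only [hy, ← Rat.cast_abs, abs_norm_unit_mul] using hx.2.2
  · rw [← QuotientGroup.out_eq' κ, unitsModSquares_mk_eq_iff]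
    exact ⟨u * κ.out, by
      rw [QuotientGroup.out_eq', eq_mul_inv_iff_mul_eq, mul_pow, sq κ.out, mul_left_comm]⟩
  · rw [hu, show u ^ 2 * (y : K) = (u ^ 2 * κ.out : (𝓞 K)ˣ) * x by simp [hy, mul_assoc],
      ← mul_assoc, ← map_mul, ← Units.val_mul, inv_mul_cancel, Units.val_one, map_one, one_mul]

/-- The map is `(c, ζ) ↦ ([ζ t], ζ t c)`, where the unit `t` moves the representative of `c` into
the cone. -/
theorem nonempty_classesIn_prod_torsion_equiv
    (hA : UnitSquareInvariant A) (X : ℝ) :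
    Nonempty (classesIn A X × torsion K ≃
      Σ κ : UnitsModSquares K, conePoints {x : K | κ.out * x ∈ A} X) := by
  choose t ht using fun c : UnitSquareClass K => exists_unit_mul_mem_fundamentalCone c.out.ne_zero
  have mem_cone (c : UnitSquareClass K) (s : (𝓞 K)ˣ) :
      mixedEmbedding K (s * c.out) ∈ fundamentalCone K ↔ s * (t c)⁻¹ ∈ torsion K := by
    rw [← unit_mul_mem_fundamentalCone_iff (ht c), ← mul_assoc]
    simp
  refine ⟨.ofBijective (fun x => ⟨(x.2 * t x.1 : (𝓞 K)ˣ), (x.2 * t x.1 : (𝓞 K)ˣ) * (x.1.1.out : K),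
    unit_mul_mem_conePoints hA x.1.2 ((mem_cone _ _).2 (by simp [-Units.val_mul]))⟩) ⟨?_, ?_⟩⟩
  · rintro ⟨⟨c, hc⟩, ζ⟩ ⟨⟨d, hd⟩, ξ⟩ h
    obtain ⟨hcd, hζξ⟩ := eq_of_unit_mul_out_eq (congrArg Sigma.fst h)
      (congrArg (fun y => (y.2 : K)) h)
    dsimp only at hcd hζξ
    subst hcd
    rw [Subtype.ext (mul_right_cancel hζξ)]
  · rintro ⟨κ, x, hx⟩
    obtain ⟨c, hc, s, rfl, rfl⟩ := exists_unit_mul_out_eq hA hx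
    have hs := (mem_cone c s).1 hx.2.1
    exact ⟨(⟨c, hc⟩, ⟨_, hs⟩), Sigma.subtype_ext (by simp) (by simp)⟩

theorem finite_classesIn (hA : UnitSquareInvariant A) {X : ℝ}
    (hfin : ∀ u : (𝓞 K)ˣ, (conePoints {x : K | u * x ∈ A} X).Finite) :
    (classesIn A X).Finite := by
  obtain ⟨e⟩ := nonempty_classesIn_prod_torsion_equiv hA X
  have := fun u => (hfin u).to_subtype
  have := Finite.of_equiv _ e.symm
  have : Finite (classesIn A X) := Finite.prod_left (torsion K)
  exact Set.toFinite _

theorem ncard_classesIn_mul_torsionOrder [Fintype (UnitsModSquares K)]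
    (hA : UnitSquareInvariant A) {X : ℝ}
    (hfin : ∀ u : (𝓞 K)ˣ, (conePoints {x : K | u * x ∈ A} X).Finite) :
    (classesIn A X).ncard * torsionOrder K =
      ∑ κ : UnitsModSquares K, (conePoints {x : K | κ.out * x ∈ A} X).ncard := by
  obtain ⟨e⟩ := nonempty_classesIn_prod_torsion_equiv hA X
  have := fun u => (hfin u).to_subtype
  have hcard := Nat.card_congr e
  rwa [Nat.card_prod, Nat.card_sigma] at hcard

theorem tendsto_ncard_classesIn_div (hA : UnitSquareInvariant A) {d : ℝ}
    (hd : ∀ u : (𝓞 K)ˣ, HasConeDensity {x : K | u * x ∈ A} d) :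
    Tendsto (fun X : ℝ => ((classesIn A X).ncard : ℝ) / X) atTop
      (𝓝 (2 ^ (InfinitePlace.nrRealPlaces K + InfinitePlace.nrComplexPlaces K) * d /
        torsionOrder K)) := by
  have := Fintype.ofFinite (UnitsModSquares K)
  have hsum : Tendsto (fun X : ℝ => ∑ κ : UnitsModSquares K,
      ((conePoints {x : K | κ.out * x ∈ A} X).ncard : ℝ) / X) atTop
      (𝓝 (∑ _ : UnitsModSquares K, d)) :=
    tendsto_finsetSum _ fun κ _ => (hd κ.out).tendsto
  rw [Finset.sum_const, Finset.card_univ, ← Nat.card_eq_fintype_card, card_unitsModSquares,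
    nsmul_eq_mul, Nat.cast_pow, Nat.cast_ofNat] at hsum
  refine (hsum.div_const (torsionOrder K : ℝ)).congr fun X => ?_
  rw [← Finset.sum_div, ← Nat.cast_sum,
    ← ncard_classesIn_mul_torsionOrder hA fun u => (hd u).finite X, Nat.cast_mul, div_right_comm,
    mul_div_cancel_right₀ _ (Nat.cast_ne_zero.2 (torsionOrder_ne_zero K))]

end UnitSquareClasses

section NonsquareClasses

variable {K : Type*} [Field K] [NumberField K]

theorem absNorm_span_singleton_le_sqrt {β : 𝓞 K} {X : ℝ}
    (h : (|Algebra.norm ℚ ((β : K) ^ 2)| : ℝ) ≤ X) :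
    (Ideal.absNorm (Ideal.span {β}) : ℝ) ≤ √X := by
  refine Real.le_sqrt_of_sq_le ?_
  rwa [Ideal.absNorm_span_singleton, Nat.cast_natAbs, Int.cast_abs, ← abs_pow, ← Int.cast_pow,
    ← map_pow, ← Rat.cast_intCast, Algebra.coe_norm_int]

variable {A : Set K}

theorem ncard_classesIn_isSquare_le (hA : ∀ x ∈ A, IsIntegral ℤ x) (X : ℝ) :
    (classesIn {x ∈ A | IsSquare x} X).ncard ≤
      Nat.card {I : Ideal (𝓞 K) // (Ideal.absNorm I : ℝ) ≤ √X} := by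
  have exists_sqrt (c : classesIn {x ∈ A | IsSquare x} X) :
      ∃ β : 𝓞 K, (c.1.out : K) = β ^ 2 := by
    obtain ⟨b, hb⟩ := c.2.1.2
    rw [← sq] at hb
    exact ⟨⟨b, .of_pow two_pos (hb ▸ hA _ c.2.1.1)⟩, hb⟩
  choose β hβ using exists_sqrt
  have : Finite {I : Ideal (𝓞 K) // (Ideal.absNorm I : ℝ) ≤ √X} :=
    (Ideal.finite_setOfPred_absNorm_le ⌊√X⌋₊).subset fun I hI => Nat.le_floor hI
  refine Nat.card_le_card_of_injective
    (fun c => ⟨Ideal.span {β c}, absNorm_span_singleton_le_sqrt (hβ c ▸ c.2.2)⟩) fun c d hcd => ?_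
  obtain ⟨u, hu⟩ := Ideal.span_singleton_eq_span_singleton.1 (congrArg Subtype.val hcd)
  refine Subtype.ext (unitSquareClass_eq_iff.2 ⟨u, ?_⟩)
  rw [hβ, hβ, ← hu, mul_comm]
  exact mul_pow (u : K) (β c : K) 2

theorem tendsto_ncard_classesIn_isSquare_div (hA : ∀ x ∈ A, IsIntegral ℤ x) :
    Tendsto (fun X : ℝ => ((classesIn {x ∈ A | IsSquare x} X).ncard : ℝ) / X) atTop (𝓝 0) := by
  have hlim := ((Ideal.tendsto_norm_le_div_atTop K).comp Real.tendsto_sqrt_atTop).mul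
    (tendsto_inv_atTop_zero.comp Real.tendsto_sqrt_atTop)
  rw [mul_zero] at hlim
  refine squeeze_zero' ?_ ?_ hlim
  · filter_upwards [eventually_ge_atTop 0] with X hX
    positivity
  · filter_upwards [eventually_gt_atTop 0] with X hX
    rw [Function.comp_apply, Function.comp_apply, ← div_eq_mul_inv, div_div,
      Real.mul_self_sqrt hX.le]
    gcongr
    exact ncard_classesIn_isSquare_le hA X

theorem tendsto_ncard_classesIn_not_isSquare_div (hA : ∀ x ∈ A, IsIntegral ℤ x)
    {a : ℝ} (hfin : ∀ X, (classesIn A X).Finite)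
    (hlim : Tendsto (fun X : ℝ => ((classesIn A X).ncard : ℝ) / X) atTop (𝓝 a)) :
    Tendsto (fun X : ℝ => ((classesIn {x ∈ A | ¬ IsSquare x} X).ncard : ℝ) / X) atTop (𝓝 a) := by
  have hsub := hlim.sub (tendsto_ncard_classesIn_isSquare_div hA)
  rw [sub_zero] at hsub
  refine hsub.congr fun X => ?_
  have hunion : classesIn {x ∈ A | IsSquare x} X ∪ classesIn {x ∈ A | ¬ IsSquare x} X =
      classesIn A X := by
    ext c
    simp only [classesIn, Set.mem_union, Set.mem_ofPred_eq]
    tauto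
  have hdisj : Disjoint (classesIn {x ∈ A | IsSquare x} X)
      (classesIn {x ∈ A | ¬ IsSquare x} X) :=
    Set.disjoint_left.2 fun c hc hc' => hc'.1.2 hc.1.2
  rw [← hunion, Set.ncard_union_eq hdisj ((hfin X).subset (hunion ▸ Set.subset_union_left))
    ((hfin X).subset (hunion ▸ Set.subset_union_right)), Nat.cast_add, ← sub_div,
    add_sub_cancel_left]

end NonsquareClasses

section NonsquareClassesModFour

variable {K : Type*} [Field K] [NumberField K]

theorem mem_mul_self_of_mem_squaresModFour {q : FractionalIdeal (𝓞 K)⁰ K} {x : K}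
    (hx : x ∈ squaresModFour q) : x ∈ q * q := by
  obtain ⟨σ, hσ, hx⟩ := hx
  have h := (q * q).coeToSubmodule.add_mem ((q * q).coeToSubmodule.smul_mem (4 : 𝓞 K) hx)
    (FractionalIdeal.mul_mem_mul hσ hσ)
  rwa [Algebra.smul_def, map_ofNat, ← sq σ, mul_div_cancel₀ _ (OfNat.ofNat_ne_zero 4),
    sub_add_cancel] at h

theorem spanSingleton_unit (u : (𝓞 K)ˣ) : FractionalIdeal.spanSingleton (𝓞 K)⁰ (u : K) = 1 := by
  rw [← FractionalIdeal.coeIdeal_span_singleton, Ideal.span_singleton_eq_top.2 u.isUnit,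
    FractionalIdeal.coeIdeal_top]

theorem unitSquareInvariant_squaresModFour (q : FractionalIdeal (𝓞 K)⁰ K) :
    UnitSquareInvariant (squaresModFour q) := fun u x => by
  have h := sq_mul_mem_squaresModFour_iff (δ := x) (Units.coe_ne_zero u) q
  rwa [spanSingleton_unit, one_mul] at h

theorem finite_classesIn_squaresModFour (q : (FractionalIdeal (𝓞 K)⁰ K)ˣ) (X : ℝ) :
    (classesIn (squaresModFour q.1) X).Finite :=
  finite_classesIn (unitSquareInvariant_squaresModFour q.1)
    fun u => (hasConeDensity_unit_mul_mem_squaresModFour q u).finite X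

theorem tendsto_ncard_classesIn_squaresModFour_div {q : (FractionalIdeal (𝓞 K)⁰ K)ˣ} :
    Tendsto (fun X : ℝ => ((classesIn (squaresModFour q.1) X).ncard : ℝ) / X) atTop
      (𝓝 (dedekindZeta_residue K / (2 ^ InfinitePlace.nrComplexPlaces K * classNumber K *
        (FractionalIdeal.absNorm q.1 : ℝ) ^ 2))) := by
  have hlim := tendsto_ncard_classesIn_div (unitSquareInvariant_squaresModFour q.1)
    (hasConeDensity_unit_mul_mem_squaresModFour q)
  have hw : (Units.torsionOrder K : ℝ) ≠ 0 := Nat.cast_ne_zero.2 (Units.torsionOrder_ne_zero K)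
  convert hlim using 2
  rw [coneDensity_eq, absNorm_fourMulSq, ← InfinitePlace.card_add_two_mul_card_eq_rank]
  push_cast
  rw [show (4 : ℝ) = 2 ^ 2 by norm_num, ← pow_mul]
  field_simp
  ring

theorem tendsto_ncard_classesIn_squaresModFour_not_isSquare_div
    {q : (FractionalIdeal (𝓞 K)⁰ K)ˣ} (hq : q.1 ≤ 1) :
    Tendsto (fun X : ℝ => ((classesIn {x ∈ squaresModFour q.1 | ¬ IsSquare x} X).ncard : ℝ) / X)
      atTop (𝓝 (dedekindZeta_residue K / (2 ^ InfinitePlace.nrComplexPlaces K * classNumber K *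
        (FractionalIdeal.absNorm q.1 : ℝ) ^ 2))) :=
  tendsto_ncard_classesIn_not_isSquare_div
    (fun _ hx => mem_one_iff_isIntegral.1
      (mul_le_one' hq hq (mem_mul_self_of_mem_squaresModFour hx)))
    (finite_classesIn_squaresModFour q) tendsto_ncard_classesIn_squaresModFour_div

end NonsquareClassesModFour

section QuadraticExtensions

variable {K : Type*} [Field K]

variable (K) in
/-- The quadratic extensions of `K` inside its algebraic closure. -/
abbrev QuadraticExtension : Type _ :=
  {L : IntermediateField K (AlgebraicClosure K) // finrank K L = 2}

variable [NumberField K]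

instance (L : QuadraticExtension K) : NumberField L.1 := numberField_of_finrank_eq_two L.2

/-- The absolute norm of the relative discriminant of `L / K`, expressed through the absolute
discriminants by the tower formula `|d_L| = d_K ^ 2 * N(𝔡_{L/K})`. -/
noncomputable def relDiscrNorm (L : QuadraticExtension K) : ℝ :=
  |(discr L.1 : ℝ)| / (discr K : ℝ) ^ 2

theorem relDiscrNorm_le_iff {L : QuadraticExtension K} {X : ℝ} :
    relDiscrNorm L ≤ X / (discr K : ℝ) ^ 2 ↔ |(discr L.1 : ℝ)| ≤ X :=
  div_le_div_iff_of_pos_right (by have := discr_ne_zero K; positivity)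

theorem inv_discr_sq_le_relDiscrNorm (L : QuadraticExtension K) :
    ((discr K : ℝ) ^ 2)⁻¹ ≤ relDiscrNorm L := by
  rw [relDiscrNorm, inv_eq_one_div]
  gcongr
  exact_mod_cast Int.one_le_abs (discr_ne_zero L.1)

theorem quadCount_eq_ncard (n : ℕ) :
    quadCount K n = {L : QuadraticExtension K | relDiscrNorm L ≤ n / (discr K : ℝ) ^ 2}.ncard := by
  have discr_le_iff (L : QuadraticExtension K) : relDiscrNorm L ≤ n / (discr K : ℝ) ^ 2 ↔
      ∃ h : NumberField L.1, |@discr L.1 _ h| ≤ (n : ℤ) := by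
    rw [relDiscrNorm_le_iff]
    exact ⟨fun h => ⟨inferInstance, mod_cast h⟩, fun ⟨_, h⟩ => mod_cast h⟩
  rw [quadCount, ← Nat.card_coe_set_eq]
  exact Nat.card_congr ((Equiv.subtypeSubtypeEquivSubtypeInter _ _).symm.trans
    (Equiv.subtypeEquivRight fun L => (discr_le_iff L).symm))

end QuadraticExtensions

section Parametrization

variable {K : Type*} [Field K]

theorem exists_unit_eq_of_spanSingleton_eq_one [NumberField K] {l : K}
    (h : FractionalIdeal.spanSingleton (𝓞 K)⁰ l = 1) : ∃ u : (𝓞 K)ˣ, (u : K) = l := by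
  obtain ⟨a, ha⟩ := (FractionalIdeal.mem_one_iff _).1
    (h ▸ FractionalIdeal.mem_spanSingleton_self (𝓞 K)⁰ l)
  rw [← ha, ← FractionalIdeal.coeIdeal_span_singleton, FractionalIdeal.coeIdeal_eq_one,
    Ideal.one_eq_top, Ideal.span_singleton_eq_top] at h
  exact ⟨h.unit, ha⟩

theorem not_isSquare_sq_mul {l δ : K} (hl : l ≠ 0) (hδ : ¬ IsSquare δ) :
    ¬ IsSquare (l ^ 2 * δ) := fun h => hδ <| by
  have := h.div (IsSquare.sq l)
  rwa [mul_div_cancel_left₀ _ (pow_ne_zero 2 hl)] at this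

theorem exists_spanSingleton_mul_eq_of_rightInverse_mk0 [NumberField K]
    {J : ClassGroup (𝓞 K) → (Ideal (𝓞 K))⁰} (hJ : Function.RightInverse J ClassGroup.mk0)
    {M : FractionalIdeal (𝓞 K)⁰ K} (hM : M ≠ 0) :
    ∃ c, ∃ l : K, l ≠ 0 ∧
      FractionalIdeal.spanSingleton (𝓞 K)⁰ l * M = (J c : Ideal (𝓞 K)) := by
  obtain ⟨a, A, ha, hA⟩ := FractionalIdeal.exists_eq_spanSingleton_mul M
  have ha' : algebraMap (𝓞 K) K a ≠ 0 := by simpa using ha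
  have hA0 : A ≠ 0 := by
    rintro rfl
    simp [hA] at hM
  lift A to (Ideal (𝓞 K))⁰ using mem_nonZeroDivisors_of_ne_zero hA0
  obtain ⟨x, hx, h⟩ := (ClassGroup.mk0_eq_mk0_iff_exists_fraction_ring K (I := A)
    (J := J (ClassGroup.mk0 A))).1 (hJ _).symm
  refine ⟨ClassGroup.mk0 A, x * algebraMap (𝓞 K) K a, mul_ne_zero hx ha', ?_⟩
  rw [← h, hA, ← mul_assoc, FractionalIdeal.spanSingleton_mul_spanSingleton, mul_assoc,
    mul_inv_cancel₀ ha', mul_one]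

/-- The nonsquare `δ` describes the pair `(L, I)` relative to the ideal `J`: it generates `L` and
has index ideal `I J`. As `I` is integral, such a `δ` is a square modulo `4 J ^ 2`. -/
structure Describes (J : (Ideal (𝓞 K))⁰) (δ : K)
    (y : QuadraticExtension K × (Ideal (𝓞 K))⁰) : Prop where
  not_isSquare : ¬ IsSquare δ
  sqrtField_eq : sqrtField δ = y.1.1
  isIndexIdeal : IsIndexIdeal δ
    ((y.2 : Ideal (𝓞 K)) * (J : Ideal (𝓞 K)) : FractionalIdeal (𝓞 K)⁰ K)

variable [NumberField K]

theorem coeIdeal_ne_zero_of_nonZeroDivisors (I : (Ideal (𝓞 K))⁰) :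
    ((I : Ideal (𝓞 K)) : FractionalIdeal (𝓞 K)⁰ K) ≠ 0 :=
  FractionalIdeal.coeIdeal_ne_zero.2 (nonZeroDivisors.coe_ne_zero I)

theorem exists_isIndexIdeal_sqrtField {δ : K} (hδ : ¬ IsSquare δ) :
    ∃ G, IsIndexIdeal δ G ∧
      relDiscrNorm ⟨sqrtField δ, finrank_sqrtField hδ⟩ * (FractionalIdeal.absNorm G : ℝ) ^ 2 =
        |(Algebra.norm ℚ δ : ℝ)| := by
  have : NumberField (sqrtField δ) := numberField_of_finrank_eq_two (finrank_sqrtField hδ)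
  obtain ⟨r, hr⟩ := exists_sq_eq_algebraMap_sqrtField δ
  obtain ⟨G, hG, hnorm⟩ := exists_isIndexIdeal (finrank_sqrtField hδ) hδ hr
  refine ⟨G, hG, ?_⟩
  have hd : (discr K : ℝ) ≠ 0 := Int.cast_ne_zero.2 (discr_ne_zero K)
  rw [relDiscrNorm, div_mul_eq_mul_div, div_eq_iff (pow_ne_zero 2 hd),
    mul_comm |(Algebra.norm ℚ δ : ℝ)|]
  exact_mod_cast hnorm

namespace Describes

variable {J J' : (Ideal (𝓞 K))⁰} {δ δ' : K} {y y' : QuadraticExtension K × (Ideal (𝓞 K))⁰}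

theorem exists_of_mem_squaresModFour (hδ : ¬ IsSquare δ)
    (hmem : δ ∈ squaresModFour ((J : Ideal (𝓞 K)) : FractionalIdeal (𝓞 K)⁰ K)) :
    ∃ y, Describes J δ y := by
  obtain ⟨G, hG, -⟩ := exists_isIndexIdeal_sqrtField hδ
  have hJ := coeIdeal_ne_zero_of_nonZeroDivisors J
  have hle : G * ((J : Ideal (𝓞 K)) : FractionalIdeal (𝓞 K)⁰ K)⁻¹ ≤ 1 := by
    rw [← mul_inv_cancel₀ hJ]
    gcongr
    exact (hG.2 _ hJ).1 hmem
  obtain ⟨I, hI⟩ := FractionalIdeal.le_one_iff_exists_coeIdeal.1 hle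
  have hI₀ : I ≠ 0 := by
    rintro rfl
    exact mul_ne_zero hG.1 (inv_ne_zero hJ) (by rw [← hI, Ideal.zero_eq_bot,
      FractionalIdeal.coeIdeal_bot])
  refine ⟨(⟨sqrtField δ, finrank_sqrtField hδ⟩, ⟨I, mem_nonZeroDivisors_of_ne_zero hI₀⟩),
    hδ, rfl, ?_⟩
  rwa [hI, inv_mul_cancel_right₀ hJ]

theorem unique (h : Describes J δ y) (h' : Describes J δ y') : y = y' := by
  refine Prod.ext (Subtype.ext (h.sqrtField_eq.symm.trans h'.sqrtField_eq)) (Subtype.ext ?_)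
  exact FractionalIdeal.coeIdeal_injective (mul_right_cancel₀
    (coeIdeal_ne_zero_of_nonZeroDivisors J) (h.isIndexIdeal.unique h'.isIndexIdeal))

theorem mem_squaresModFour (h : Describes J δ y) :
    δ ∈ squaresModFour ((J : Ideal (𝓞 K)) : FractionalIdeal (𝓞 K)⁰ K) :=
  (h.isIndexIdeal.2 _ (coeIdeal_ne_zero_of_nonZeroDivisors J)).2
    (mul_le_of_le_one_left' FractionalIdeal.coeIdeal_le_one)

theorem relDiscrNorm_mul_sq (h : Describes J δ y) :
    relDiscrNorm y.1 * (Ideal.absNorm (y.2 : Ideal (𝓞 K)) : ℝ) ^ 2 *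
      (Ideal.absNorm (J : Ideal (𝓞 K)) : ℝ) ^ 2 = |(Algebra.norm ℚ δ : ℝ)| := by
  obtain ⟨G, hG, hnorm⟩ := exists_isIndexIdeal_sqrtField h.not_isSquare
  have hL : ⟨sqrtField δ, finrank_sqrtField h.not_isSquare⟩ = y.1 := Subtype.ext h.sqrtField_eq
  rw [hL, hG.unique h.isIndexIdeal, map_mul, FractionalIdeal.coeIdeal_absNorm,
    FractionalIdeal.coeIdeal_absNorm] at hnorm
  rw [← hnorm]
  push_cast
  ring

theorem sq_mul (h : Describes J δ y) {l : K} (hl : l ≠ 0)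
    (hJ' : FractionalIdeal.spanSingleton (𝓞 K)⁰ l * (J : Ideal (𝓞 K)) = (J' : Ideal (𝓞 K))) :
    Describes J' (l ^ 2 * δ) y where
  not_isSquare := not_isSquare_sq_mul hl h.not_isSquare
  sqrtField_eq := (sqrtField_sq_mul hl δ).trans h.sqrtField_eq
  isIndexIdeal := by
    rw [← hJ', mul_left_comm]
    exact h.isIndexIdeal.sq_mul hl

theorem unit_sq_mul (h : Describes J δ y) (u : (𝓞 K)ˣ) : Describes J ((u : K) ^ 2 * δ) y :=
  h.sq_mul (Units.coe_ne_zero u) (by rw [spanSingleton_unit, one_mul])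

theorem exists_eq_sq_mul (h : Describes J δ y) (h' : Describes J' δ' y) :
    ∃ l : K, l ≠ 0 ∧ δ' = l ^ 2 * δ ∧
      FractionalIdeal.spanSingleton (𝓞 K)⁰ l * (J : Ideal (𝓞 K)) = (J' : Ideal (𝓞 K)) := by
  obtain ⟨l, hl, rfl⟩ := exists_eq_sq_mul_of_sqrtField_eq h.not_isSquare h'.not_isSquare
    (h.sqrtField_eq.trans h'.sqrtField_eq.symm)
  have hG := (h.isIndexIdeal.sq_mul hl).unique h'.isIndexIdeal
  rw [mul_left_comm] at hG
  exact ⟨l, hl, rfl, mul_left_cancel₀ (coeIdeal_ne_zero_of_nonZeroDivisors y.2) hG⟩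

theorem exists_unit_sq_mul (h : Describes J δ y) (h' : Describes J δ' y) :
    ∃ u : (𝓞 K)ˣ, δ' = (u : K) ^ 2 * δ := by
  obtain ⟨l, -, rfl, hl⟩ := h.exists_eq_sq_mul h'
  obtain ⟨u, rfl⟩ := exists_unit_eq_of_spanSingleton_eq_one
    (mul_right_cancel₀ (coeIdeal_ne_zero_of_nonZeroDivisors J) (hl.trans (one_mul _).symm))
  exact ⟨u, rfl⟩

theorem mk0_eq_mk0 (h : Describes J δ y) (h' : Describes J' δ' y) :
    ClassGroup.mk0 J = ClassGroup.mk0 J' := by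
  obtain ⟨l, hl, -, hJ⟩ := h.exists_eq_sq_mul h'
  exact (ClassGroup.mk0_eq_mk0_iff_exists_fraction_ring K).2 ⟨l, hl, hJ⟩

theorem exists_of_rightInverse_mk0 {J : ClassGroup (𝓞 K) → (Ideal (𝓞 K))⁰}
    (hJ : Function.RightInverse J ClassGroup.mk0) (y : QuadraticExtension K × (Ideal (𝓞 K))⁰) :
    ∃ c δ, Describes (J c) δ y := by
  obtain ⟨δ, hδ, hL⟩ := exists_sqrtField_eq y.1.2
  obtain ⟨G, hG, -⟩ := exists_isIndexIdeal_sqrtField hδ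
  have hI := coeIdeal_ne_zero_of_nonZeroDivisors y.2
  obtain ⟨c, l, hl, hc⟩ := exists_spanSingleton_mul_eq_of_rightInverse_mk0 hJ
    (mul_ne_zero (inv_ne_zero hI) hG.1)
  refine ⟨c, l ^ 2 * δ, not_isSquare_sq_mul hl hδ, (sqrtField_sq_mul hl δ).trans hL, ?_⟩
  rw [← hc, mul_left_comm, mul_inv_cancel_left₀ hI]
  exact hG.sq_mul hl

end Describes

end Parametrization

section PairCount

variable {K : Type*} [Field K] [NumberField K]

variable (K) in
/-- The pairs of a quadratic extension `L / K` and a nonzero ideal `I` with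
`N(𝔡_{L/K}) N(I) ^ 2 ≤ X`. -/
def extensionIdealPairs (X : ℝ) : Set (QuadraticExtension K × (Ideal (𝓞 K))⁰) :=
  {y | relDiscrNorm y.1 * (Ideal.absNorm (y.2 : Ideal (𝓞 K)) : ℝ) ^ 2 ≤ X}

/-- The unit-square classes of nonsquares that are squares modulo `4 J ^ 2` and whose norm is at
most `X N(J) ^ 2`. -/
abbrev describingClasses (J : (Ideal (𝓞 K))⁰) (X : ℝ) : Set (UnitSquareClass K) :=
  classesIn {x ∈ squaresModFour ((J : Ideal (𝓞 K)) : FractionalIdeal (𝓞 K)⁰ K) | ¬ IsSquare x}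
    (X * (Ideal.absNorm (J : Ideal (𝓞 K)) : ℝ) ^ 2)

theorem absNorm_sq_pos (J : (Ideal (𝓞 K))⁰) :
    0 < (Ideal.absNorm (J : Ideal (𝓞 K)) : ℝ) ^ 2 := by
  have := Ideal.absNorm_pos_of_nonZeroDivisors J
  positivity

theorem Describes.mem_extensionIdealPairs_iff {J : (Ideal (𝓞 K))⁰} {d : UnitSquareClass K}
    {y : QuadraticExtension K × (Ideal (𝓞 K))⁰} {X : ℝ} (h : Describes J (d.out : K) y) :
    y ∈ extensionIdealPairs K X ↔ d ∈ describingClasses J X := by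
  have hnorm : y ∈ extensionIdealPairs K X ↔ |(Algebra.norm ℚ (d.out : K) : ℝ)| ≤
      X * (Ideal.absNorm (J : Ideal (𝓞 K)) : ℝ) ^ 2 := by
    rw [← h.relDiscrNorm_mul_sq, mul_le_mul_iff_left₀ (absNorm_sq_pos J)]
    rfl
  exact hnorm.trans (and_iff_right ⟨h.mem_squaresModFour, h.not_isSquare⟩).symm

theorem finite_describingClasses (J : (Ideal (𝓞 K))⁰) (X : ℝ) : (describingClasses J X).Finite :=
  (finite_classesIn_squaresModFour (FractionalIdeal.mk0 K J) _).subset fun _ hc => ⟨hc.1.1, hc.2⟩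

theorem tendsto_ncard_describingClasses_div (J : (Ideal (𝓞 K))⁰) :
    Tendsto (fun X : ℝ => ((describingClasses J X).ncard : ℝ) / X) atTop
      (𝓝 (dedekindZeta_residue K / (2 ^ InfinitePlace.nrComplexPlaces K * classNumber K))) := by
  have hJ := absNorm_sq_pos J
  have hlim := ((tendsto_ncard_classesIn_squaresModFour_not_isSquare_div
    (q := FractionalIdeal.mk0 K J) FractionalIdeal.coeIdeal_le_one).comp
      (tendsto_id.atTop_mul_const hJ)).mul_const ((Ideal.absNorm (J : Ideal (𝓞 K)) : ℝ) ^ 2)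
  rw [FractionalIdeal.coe_mk0, FractionalIdeal.coeIdeal_absNorm, Rat.cast_natCast, ← div_div,
    div_mul_cancel₀ _ hJ.ne'] at hlim
  refine hlim.congr fun X => ?_
  rw [Function.comp_apply, id, div_mul_eq_mul_div, mul_div_mul_right _ _ hJ.ne']

variable {J : ClassGroup (𝓞 K) → (Ideal (𝓞 K))⁰}

theorem nonempty_describingClasses_equiv_extensionIdealPairs
    (hJ : Function.RightInverse J ClassGroup.mk0) (X : ℝ) :
    Nonempty ((Σ c, describingClasses (J c) X) ≃ extensionIdealPairs K X) := by
  have exists_pair (d : Σ c, describingClasses (J c) X) :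
      ∃ y : extensionIdealPairs K X, Describes (J d.1) (d.2.1.out : K) y.1 := by
    obtain ⟨y, hy⟩ := Describes.exists_of_mem_squaresModFour d.2.2.1.2 d.2.2.1.1
    exact ⟨⟨y, hy.mem_extensionIdealPairs_iff.2 d.2.2⟩, hy⟩
  choose F hF using exists_pair
  refine ⟨Equiv.ofBijective F ⟨fun ⟨c, d⟩ ⟨c', d'⟩ h => ?_, fun ⟨y, hy⟩ => ?_⟩⟩
  · have hd : Describes (J c) (d.1.out : K) _ := hF ⟨c, d⟩
    have hd' : Describes (J c') (d'.1.out : K) _ := h ▸ hF ⟨c', d'⟩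
    obtain rfl : c = c' := by rw [← hJ c, hd.mk0_eq_mk0 hd', hJ c']
    obtain rfl : d = d' := Subtype.ext (unitSquareClass_eq_iff.2 (hd.exists_unit_sq_mul hd'))
    rfl
  · obtain ⟨c, δ, hδ⟩ := Describes.exists_of_rightInverse_mk0 hJ y
    have hδ₀ : δ ≠ 0 := fun h => hδ.not_isSquare (h ▸ IsSquare.zero)
    obtain ⟨u, hu⟩ := exists_out_eq_sq_mul (Units.mk0 δ hδ₀)
    have hout : Describes (J c) ((Units.mk0 δ hδ₀ : UnitSquareClass K).out : K) y :=
      hu ▸ hδ.unit_sq_mul u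
    exact ⟨⟨c, _, hout.mem_extensionIdealPairs_iff.1 hy⟩, Subtype.ext ((hF _).unique hout)⟩

theorem finite_extensionIdealPairs (X : ℝ) : (extensionIdealPairs K X).Finite := by
  obtain ⟨J, hJ⟩ := (ClassGroup.mk0_surjective (R := 𝓞 K)).hasRightInverse
  obtain ⟨e⟩ := nonempty_describingClasses_equiv_extensionIdealPairs hJ X
  have (c : ClassGroup (𝓞 K)) : Finite (describingClasses (J c) X) :=
    finite_describingClasses (J c) X
  exact Finite.of_equiv _ e

theorem ncard_extensionIdealPairs (hJ : Function.RightInverse J ClassGroup.mk0) (X : ℝ) :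
    (extensionIdealPairs K X).ncard = ∑ c, (describingClasses (J c) X).ncard := by
  obtain ⟨e⟩ := nonempty_describingClasses_equiv_extensionIdealPairs hJ X
  have (c : ClassGroup (𝓞 K)) : Finite (describingClasses (J c) X) :=
    finite_describingClasses (J c) X
  simp only [← Nat.card_coe_set_eq, ← Nat.card_congr e, Nat.card_sigma]

theorem tendsto_ncard_extensionIdealPairs_div :
    Tendsto (fun X : ℝ => ((extensionIdealPairs K X).ncard : ℝ) / X) atTop
      (𝓝 (dedekindZeta_residue K / 2 ^ InfinitePlace.nrComplexPlaces K)) := by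
  obtain ⟨J, hJ⟩ := (ClassGroup.mk0_surjective (R := 𝓞 K)).hasRightInverse
  have hlim := tendsto_finsetSum Finset.univ fun c _ => tendsto_ncard_describingClasses_div (J c)
  have hsum : ∑ _c : ClassGroup (𝓞 K), dedekindZeta_residue K /
      (2 ^ InfinitePlace.nrComplexPlaces K * classNumber K) =
        dedekindZeta_residue K / 2 ^ InfinitePlace.nrComplexPlaces K := by
    rw [Finset.sum_const, Finset.card_univ, nsmul_eq_mul, ← classNumber, ← div_div,
      mul_div_cancel₀ _ (Nat.cast_ne_zero.2 (classNumber_ne_zero K))]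
  rw [hsum] at hlim
  refine hlim.congr fun X => ?_
  rw [ncard_extensionIdealPairs hJ, Nat.cast_sum, Finset.sum_div]

end PairCount

section RealQuadraticFields

variable {K : Type*} [Field K]

theorem isTotallyReal_of_sq_eq_ratCast [CharZero K] (hK : finrank ℚ K = 2) {d : ℚ}
    (hd : ¬ IsSquare d) (hd₀ : 0 ≤ d) {x : K} (hx : x ^ 2 = (d : K)) : IsTotallyReal K := by
  refine ⟨fun v => InfinitePlace.isReal_iff.2 (ComplexEmbedding.isReal_iff.2 (RingHom.ext ?_))⟩
  have hx_real : (starRingEnd ℂ) (v.embedding x) = v.embedding x := by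
    have hsq : (v.embedding x) ^ 2 = ((√(d : ℝ) : ℝ) : ℂ) ^ 2 := by
      rw [← map_pow, hx, map_ratCast, ← Complex.ofReal_pow,
        Real.sq_sqrt (Rat.cast_nonneg.2 hd₀), Complex.ofReal_ratCast]
    rcases sq_eq_sq_iff_eq_or_eq_neg.1 hsq with h | h <;> simp [h]
  intro z
  obtain ⟨a, b, rfl⟩ := exists_eq_add_mul_of_finrank_eq_two hK
    (ne_algebraMap_of_sq_eq_algebraMap hd hx) z
  simp [ComplexEmbedding.conjugate_coe_eq, hx_real]

variable [NumberField K]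

theorem torsionOrder_eq_two_of_nrRealPlaces_pos (h : 0 < InfinitePlace.nrRealPlaces K) :
    Units.torsionOrder K = 2 := by
  obtain ⟨ζ, hζ⟩ := IsCyclic.exists_ofOrder_eq_natCard (α := Units.torsion K)
  have horder : orderOf (ζ.1 : K) = Units.torsionOrder K := by
    rw [Units.torsionOrder, ← hζ, ← Subgroup.orderOf_coe, ← orderOf_units]
    exact orderOf_injective (algebraMap (𝓞 K) K : 𝓞 K →* K) RingOfIntegers.coe_injective _
  have hle : Units.torsionOrder K ≤ 2 := by
    by_contra! hlt
    exact h.ne' (InfinitePlace.IsPrimitiveRoot.nrRealPlaces_eq_zero_of_two_lt hlt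
      (horder ▸ IsPrimitiveRoot.orderOf (ζ.1 : K)))
  exact le_antisymm hle (Nat.le_of_dvd (Units.torsionOrder_pos K)
    (even_iff_two_dvd.1 (Units.even_torsionOrder K)))

theorem abs_discr_eq_of_sq_eq_intCast (hK : finrank ℚ K = 2) {d : ℤ} (hd : Squarefree d)
    (hd_sq : ¬ IsSquare d) (hd_mod : d % 4 = 1) {x : K} (hx : x ^ 2 = (d : K)) :
    |discr K| = |d| := by
  obtain ⟨G, hG, hnorm⟩ := exists_isIndexIdeal (K := ℚ) (δ := d) hK
    (Rat.isSquare_intCast_iff.not.2 hd_sq) (hx.trans (by simp))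
  have hd_mem : (d : ℚ) ∈ squaresModFour (1 : FractionalIdeal (𝓞 ℚ)⁰ ℚ) := by
    refine ⟨1, FractionalIdeal.one_mem_one _, ?_⟩
    rw [one_mul, mem_one_iff_isIntegral]
    refine cast (congrArg (IsIntegral ℤ) ?_) (isIntegral_algebraMap (R := ℤ) (x := d / 4))
    have hd_eq : (d : ℚ) = 4 * (d / 4 : ℤ) + 1 := by
      exact_mod_cast (Int.mul_ediv_add_emod d 4).symm.trans (by rw [hd_mod])
    rw [hd_eq, eq_intCast]
    ring
  obtain ⟨I, rfl⟩ := FractionalIdeal.le_one_iff_exists_coeIdeal.1 ((hG.2 1 one_ne_zero).1 hd_mem)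
  have hdiscr : |discr K| * (Ideal.absNorm I : ℤ) ^ 2 = |d| := by
    -- `hnorm` uses the `ℚ`-algebra structure that `ℚ` has as a field of characteristic zero.
    rw [Subsingleton.elim DivisionRing.toRatAlgebra (Algebra.id ℚ), Algebra.norm_self,
      MonoidHom.id_apply, FractionalIdeal.coeIdeal_absNorm, Rat.numberField_discr, Int.cast_one,
      one_pow, one_mul] at hnorm
    exact_mod_cast hnorm
  have hI : IsUnit (Ideal.absNorm I : ℤ) :=
    hd _ ((dvd_abs _ _).1 ⟨|discr K|, by rw [← hdiscr]; ring⟩)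
  rwa [sq, Int.isUnit_mul_self hI, mul_one] at hdiscr

theorem gFactor_two_div : gFactor 2 1 / (1 + ((2 : ℕ) : ℝ)⁻¹) = 1 := by
  norm_num [gFactor, Real.rpow_neg]

theorem gFactor_four_div : gFactor 4 1 / (1 + ((4 : ℕ) : ℝ)⁻¹) = 1 := by
  norm_num [gFactor, Real.rpow_neg]

theorem finprod_gFactor_div_eq_one (hK : finrank ℚ K = 2) :
    ∏ᶠ 𝔭 ∈ {𝔭 : Ideal (𝓞 K) | 𝔭.IsPrime ∧ (2 : 𝓞 K) ∈ 𝔭},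
      gFactor (Ideal.absNorm 𝔭) 1 / (1 + ((Ideal.absNorm 𝔭 : ℝ))⁻¹) = 1 := by
  refine finprod_mem_eq_one_of_forall_eq_one fun 𝔭 ⟨h𝔭, h2⟩ => ?_
  have hdvd : Ideal.absNorm 𝔭 ∣ 2 ^ 2 := by
    have hspan := Ideal.absNorm_span_natCast (S := 𝓞 K) 2
    rw [RingOfIntegers.rank, hK] at hspan
    rw [← hspan]
    exact Ideal.absNorm_dvd_absNorm_of_le ((Ideal.span_singleton_le_iff_mem 𝔭).2 h2)
  obtain ⟨k, hk, h⟩ := (Nat.dvd_prime_pow Nat.prime_two).1 hdvd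
  interval_cases k
  · exact absurd (Ideal.absNorm_eq_one_iff.1 h) h𝔭.ne_top
  · rw [h, pow_one, gFactor_two_div]
  · rw [h]
    exact gFactor_four_div

theorem dedekindZeta_residue_of_isTotallyReal [IsTotallyReal K] (hK : finrank ℚ K = 2) :
    dedekindZeta_residue K = 2 * Units.regulator K * classNumber K / √|(discr K : ℝ)| := by
  have hreal : InfinitePlace.nrRealPlaces K = 2 := IsTotallyReal.finrank (K := K) ▸ hK
  rw [dedekindZeta_residue_def, hreal, IsTotallyReal.nrComplexPlaces_eq_zero,
    torsionOrder_eq_two_of_nrRealPlaces_pos (by omega), ← Int.cast_abs]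
  field_simp
  norm_num [mul_comm, mul_left_comm]

end RealQuadraticFields

theorem dedekindZeta_residue_div_eq_of_sq_eq_prime {p : ℕ} (hp : p.Prime) (hpmod : p % 4 = 1)
    {K : Type*} [Field K] [NumberField K] (hK : finrank ℚ K = 2) {x : K} (hx : x ^ 2 = (p : K)) :
    dedekindZeta_residue K /
        (2 ^ InfinitePlace.nrComplexPlaces K * (discr K : ℝ) ^ 2 * dedekindZetaTwo K) =
      2 * Units.regulator K * classNumber K / ((p : ℝ) ^ ((5 : ℝ) / 2) * dedekindZetaTwo K) := by
  have hp_sq : ¬ IsSquare p := (Nat.prime_iff.1 hp).irreducible.not_isSquare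
  have : IsTotallyReal K := isTotallyReal_of_sq_eq_ratCast (d := p) hK
    (Rat.isSquare_natCast_iff.not.2 hp_sq) p.cast_nonneg (by simpa using hx)
  have hdiscr : |(discr K : ℝ)| = p := by
    have := abs_discr_eq_of_sq_eq_intCast (d := p) hK (Int.squarefree_natCast.2 hp.squarefree)
      (Int.isSquare_natCast_iff.not.2 hp_sq) (by omega) (by simpa using hx)
    exact_mod_cast this.trans (Nat.abs_cast p)
  have hpow : (p : ℝ) ^ ((5 : ℝ) / 2) = √p * (p : ℝ) ^ 2 := by
    rw [Real.sqrt_eq_rpow, ← Real.rpow_natCast, ← Real.rpow_add (Nat.cast_pos.2 hp.pos)]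
    norm_num
  rw [dedekindZeta_residue_of_isTotallyReal hK, IsTotallyReal.nrComplexPlaces_eq_zero, pow_zero,
    one_mul, ← sq_abs (discr K : ℝ), hdiscr, div_div, ← mul_assoc, hpow]

theorem quadratic_count_real_general (K : Type*) [Field K] [NumberField K] :
    Tendsto (fun n : ℕ => (quadCount K n : ℝ) / n) atTop
      (𝓝 (dedekindZeta_residue K /
        (2 ^ InfinitePlace.nrComplexPlaces K * (discr K : ℝ) ^ 2 * dedekindZetaTwo K))) := by
  have hd : 0 < (discr K : ℝ) ^ 2 := by
    have := discr_ne_zero K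
    positivity
  have hcount := tendsto_ncard_le_div_of_tendsto_ncard_mul_absNorm_sq_le_div (inv_pos.2 hd)
    inv_discr_sq_le_relDiscrNorm finite_extensionIdealPairs tendsto_ncard_extensionIdealPairs_div
  have hlim := (hcount.comp (tendsto_natCast_atTop_atTop.atTop_div_const hd)).div_const
    ((discr K : ℝ) ^ 2)
  rw [div_div, div_div, mul_comm (dedekindZetaTwo K), ← mul_assoc] at hlim
  refine hlim.congr fun n => ?_
  rw [quadCount_eq_ncard, Function.comp_apply, div_div, div_mul_cancel₀ _ hd.ne']

theorem quadratic_count_real (p : ℕ) (hp : p.Prime) (hpmod : p % 4 = 1)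
    (K : Type*) [Field K] [NumberField K]
    (hdeg : Module.finrank ℚ K = 2) (hsqrt : ∃ x : K, x ^ 2 = (p : K)) :
    Tendsto (fun n : ℕ => (quadCount K n : ℝ) / (n : ℝ)) atTop
      (nhds ((2 * NumberField.Units.regulator K * (NumberField.classNumber K : ℝ)) /
          ((p : ℝ) ^ ((5 : ℝ) / 2) * dedekindZetaTwo K) *
        ∏ᶠ 𝔭 ∈ {𝔭 : Ideal (𝓞 K) | 𝔭.IsPrime ∧ (2 : 𝓞 K) ∈ 𝔭},
          gFactor (Ideal.absNorm 𝔭) 1 / (1 + ((Ideal.absNorm 𝔭 : ℝ))⁻¹))) := by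
  obtain ⟨x, hx⟩ := hsqrt
  rw [finprod_gFactor_div_eq_one hdeg, mul_one,
    ← dedekindZeta_residue_div_eq_of_sq_eq_prime hp hpmod hdeg hx]
  exact quadratic_count_real_general K
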